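/- arXiv:2401.16941 — 4 statements merged into one kernel-verified Lean document; each statement's English description precedes it below -/
import Mathlib

section
/- Let L be a field of characteristic 0 and let δ_i : L → L (i ∈ ℤ_{≤0}) be additive maps. Then the following are equivalent: (1) there exists a (necessarily unique) deformed Laurent series product · on L((T^{-1})) such that T·a = aT + Σ_{i≤0} δ_i(a)T^i for all a ∈ L; (2) the δ_i satisfy the Leibniz-type identity (★). Moreover, when these hold, the product is given on monomials by a T^i · b T^j = ab T^{i+j} + Σ_{k≥1} Σ_{(j_1,…,j_k)∈(ℤ_{≤0})^k} binom(i,k) a·δ_{j_1}⋯δ_{j_k}(b) T^{j_1+⋯+j_k−k+i+j}, extended to all of L((T^{-1})) by additivity and continuity. -/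
noncomputable section

open scoped Classical

/-- The generalized binomial coefficient `binom n k` for an integer `n` and natural `k`;
it equals `n (n-1) ⋯ (n-k+1) / k!` (an integer). -/
def zbinom (n : ℤ) (k : ℕ) : ℤ :=
  if 0 ≤ n then (n.toNat.choose k : ℤ) else (-1) ^ k * (((k : ℤ) - 1 - n).toNat.choose k : ℤ)

/-- The generalized binomial coefficient `a (a-1) ⋯ (a-k+1) / k!` in a field `K`
(of characteristic zero in all uses). -/
def gbinom {K : Type*} [Field K] (a : K) (k : ℕ) : K :=
  (∏ i ∈ Finset.range k, (a - (i : K))) / (k.factorial : K)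

/-- Inverse Laurent series over `L`: formal sums `Σ_{i ∈ ℤ} a_i T^i` whose support is
bounded above. -/
structure InvLaurent (L : Type*) [Zero L] where
  coeff : ℤ → L
  bdd' : ∃ N : ℤ, ∀ i : ℤ, N < i → coeff i = 0

namespace InvLaurent

variable {L : Type*} [Field L]

@[ext] theorem ext {f g : InvLaurent L} (h : ∀ i, f.coeff i = g.coeff i) : f = g := by
  cases f; cases g
  simp only [mk.injEq]
  funext i; exact h i

instance : Zero (InvLaurent L) := ⟨⟨fun _ => 0, ⟨0, fun _ _ => rfl⟩⟩⟩

instance : Add (InvLaurent L) :=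
  ⟨fun f g => ⟨fun i => f.coeff i + g.coeff i, by
    obtain ⟨N, hN⟩ := f.bdd'; obtain ⟨M, hM⟩ := g.bdd'
    exact ⟨max N M, fun i hi => by
      show f.coeff i + g.coeff i = 0
      rw [hN i (lt_of_le_of_lt (le_max_left _ _) hi),
        hM i (lt_of_le_of_lt (le_max_right _ _) hi), add_zero]⟩⟩⟩

instance : Neg (InvLaurent L) :=
  ⟨fun f => ⟨fun i => -f.coeff i, by
    obtain ⟨N, hN⟩ := f.bdd'
    exact ⟨N, fun i hi => by show -f.coeff i = 0; rw [hN i hi, neg_zero]⟩⟩⟩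

@[simp] lemma coeff_zero (i : ℤ) : (0 : InvLaurent L).coeff i = 0 := rfl
@[simp] lemma coeff_add (f g : InvLaurent L) (i : ℤ) :
    (f + g).coeff i = f.coeff i + g.coeff i := rfl
@[simp] lemma coeff_neg (f : InvLaurent L) (i : ℤ) : (-f).coeff i = -f.coeff i := rfl

instance : AddCommGroup (InvLaurent L) where
  add_assoc f g h := by ext i; simp [add_assoc]
  zero_add f := by ext i; simp
  add_zero f := by ext i; simp
  neg_add_cancel f := by ext i; simp
  add_comm f g := by ext i; simp [add_comm]
  nsmul := nsmulRec
  zsmul := zsmulRec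

@[simp] lemma coeff_sub (f g : InvLaurent L) (i : ℤ) :
    (f - g).coeff i = f.coeff i - g.coeff i := by
  rw [sub_eq_add_neg, coeff_add, coeff_neg, sub_eq_add_neg]

/-- The series `a T^n`. -/
def single (n : ℤ) (a : L) : InvLaurent L :=
  ⟨fun i => if i = n then a else 0, ⟨n, fun i hi => if_neg (by omega)⟩⟩

/-- The series `T^n`. -/
def T (L : Type*) [Field L] (n : ℤ) : InvLaurent L := single n 1

/-- Coefficientwise multiplication by a scalar `b ∈ L` on the left. -/
def lsmul (b : L) (f : InvLaurent L) : InvLaurent L :=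
  ⟨fun i => b * f.coeff i, by
    obtain ⟨N, hN⟩ := f.bdd'
    exact ⟨N, fun i hi => by show b * f.coeff i = 0; rw [hN i hi, mul_zero]⟩⟩

/-- The standard degree map, with values in `ℤ ∪ {-∞}`. -/
def deg (f : InvLaurent L) : WithBot ℤ :=
  if f = 0 then ⊥ else ↑(sSup {i : ℤ | f.coeff i ≠ 0})

lemma deg_eq_bot_iff (f : InvLaurent L) : deg f = ⊥ ↔ f = 0 := by
  unfold deg
  split
  · simpa
  · simp_all

lemma support_nonempty {f : InvLaurent L} (hf : f ≠ 0) :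
    {i : ℤ | f.coeff i ≠ 0}.Nonempty := by
  by_contra h
  rw [Set.not_nonempty_iff_eq_empty] at h
  apply hf
  ext i
  have : i ∉ ({i : ℤ | f.coeff i ≠ 0}) := by rw [h]; exact Set.notMem_empty i
  simpa using this

lemma support_bddAbove (f : InvLaurent L) : BddAbove {i : ℤ | f.coeff i ≠ 0} := by
  obtain ⟨N, hN⟩ := f.bdd'
  exact ⟨N, fun i hi => by by_contra h; exact hi (hN i (by omega))⟩

lemma le_deg {f : InvLaurent L} {i : ℤ} (h : f.coeff i ≠ 0) : (i : WithBot ℤ) ≤ deg f := by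
  have hf : f ≠ 0 := by
    intro h0; rw [h0] at h; exact h rfl
  rw [deg, if_neg hf]
  exact_mod_cast le_csSup (support_bddAbove f) h

lemma deg_neg (f : InvLaurent L) : deg (-f) = deg f := by
  unfold deg
  have h0 : -f = 0 ↔ f = 0 := by
    constructor
    · intro h; ext i
      have := congrArg (fun g => InvLaurent.coeff g i) h
      simp only [coeff_neg, coeff_zero, neg_eq_zero] at this
      simpa using this
    · intro h; rw [h]; ext i; simp
  have hs : {i : ℤ | (-f).coeff i ≠ 0} = {i : ℤ | f.coeff i ≠ 0} := by
    ext i; simp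
  rw [hs]
  by_cases h : f = 0
  · rw [if_pos (h0.mpr h), if_pos h]
  · rw [if_neg (fun hh => h (h0.mp hh)), if_neg h]

lemma deg_add_le (f g : InvLaurent L) : deg (f + g) ≤ max (deg f) (deg g) := by
  by_cases h : f + g = 0
  · rw [(deg_eq_bot_iff _).mpr h]; exact bot_le
  · rw [deg, if_neg h]
    have hne := support_nonempty h
    have : sSup {i : ℤ | (f + g).coeff i ≠ 0} ∈ {i : ℤ | (f + g).coeff i ≠ 0} := by
      obtain ⟨N, hN⟩ := support_bddAbove (f + g)
      obtain ⟨m, hm, hmax⟩ := Int.exists_greatest_of_bdd ⟨N, fun i hi => hN hi⟩ hne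
      have : sSup {i : ℤ | (f + g).coeff i ≠ 0} = m :=
        le_antisymm (csSup_le hne hmax) (le_csSup (support_bddAbove _) hm)
      rw [this]; exact hm
    set m := sSup {i : ℤ | (f + g).coeff i ≠ 0} with hm
    have hc : (f + g).coeff m ≠ 0 := this
    rw [coeff_add] at hc
    rcases (by by_contra hh; push_neg at hh; rw [hh.1, hh.2, add_zero] at hc; exact hc rfl :
        f.coeff m ≠ 0 ∨ g.coeff m ≠ 0) with hf | hg
    · exact le_trans (le_deg hf) (le_max_left _ _)
    · exact le_trans (le_deg hg) (le_max_right _ _)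

/-- real-exponential of a degree value: `e^d`, with `e^{-∞} = 0`. -/
def edeg : WithBot ℤ → ℝ
  | ⊥ => 0
  | (n : ℤ) => Real.exp n

lemma edeg_nonneg (d : WithBot ℤ) : 0 ≤ edeg d := by
  cases d with
  | bot => exact le_refl 0
  | coe n => exact le_of_lt (Real.exp_pos _)

lemma edeg_mono {d d' : WithBot ℤ} (h : d ≤ d') : edeg d ≤ edeg d' := by
  cases d with
  | bot => exact edeg_nonneg d'
  | coe n =>
    cases d' with
    | bot => exact absurd h (by simp)
    | coe m =>
      have : n ≤ m := by exact_mod_cast h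
      exact Real.exp_le_exp.mpr (by exact_mod_cast this)

lemma edeg_eq_zero_iff (d : WithBot ℤ) : edeg d = 0 ↔ d = ⊥ := by
  cases d with
  | bot => simp [edeg]
  | coe n =>
    simp only [edeg]
    constructor
    · intro h; exact absurd h (ne_of_gt (Real.exp_pos _))
    · intro h; exact absurd h (by simp)

noncomputable instance : MetricSpace (InvLaurent L) where
  dist f g := edeg (deg (f - g))
  dist_self f := by
    show edeg (deg (f - f)) = 0
    rw [sub_self, (deg_eq_bot_iff (0 : InvLaurent L)).mpr rfl]
    rfl
  dist_comm f g := by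
    show edeg (deg (f - g)) = edeg (deg (g - f))
    have h : g - f = -(f - g) := by abel
    rw [h, deg_neg]
  dist_triangle f g h := by
    show edeg (deg (f - h)) ≤ edeg (deg (f - g)) + edeg (deg (g - h))
    have h1 : f - h = (f - g) + (g - h) := by abel
    have h2 : deg (f - h) ≤ max (deg (f - g)) (deg (g - h)) := by
      rw [h1]; exact deg_add_le _ _
    calc edeg (deg (f - h)) ≤ edeg (max (deg (f - g)) (deg (g - h))) := edeg_mono h2
      _ ≤ edeg (deg (f - g)) + edeg (deg (g - h)) := by
          rcases max_cases (deg (f - g)) (deg (g - h)) with ⟨hm, _⟩ | ⟨hm, _⟩ <;> rw [hm]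
          · exact le_add_of_nonneg_right (edeg_nonneg _)
          · exact le_add_of_nonneg_left (edeg_nonneg _)
  eq_of_dist_eq_zero := by
    intro f g hd
    have hd' : edeg (deg (f - g)) = 0 := hd
    have : deg (f - g) = ⊥ := (edeg_eq_zero_iff _).mp hd'
    have := (deg_eq_bot_iff _).mp this
    exact sub_eq_zero.mp this

end InvLaurent

open InvLaurent

/-- A deformed Laurent series product on `L((T⁻¹))`:
an associative, distributive, jointly continuous multiplication which restricts to left
scalar multiplication by `L`, satisfies `T^i · T^j = T^{i+j}`, and is compatible with the
standard degree map. -/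
structure DeformedProduct (L : Type*) [Field L] where
  mul : InvLaurent L → InvLaurent L → InvLaurent L
  mul_assoc : ∀ f g h, mul (mul f g) h = mul f (mul g h)
  left_distrib : ∀ f g h, mul f (g + h) = mul f g + mul f h
  right_distrib : ∀ f g h, mul (f + g) h = mul f h + mul g h
  continuous_mul : Continuous fun p : InvLaurent L × InvLaurent L => mul p.1 p.2
  lsmul_eq : ∀ (b : L) (f : InvLaurent L), mul (single 0 b) f = lsmul b f
  T_mul_T : ∀ i j : ℤ, mul (T L i) (T L j) = T L (i + j)
  deg_mul : ∀ f g, deg (mul f g) = deg f + deg g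

/-- `HasDelta μ δ` says that `T · a = a T + Σ_{i ≤ 0} δ_i(a) T^i` for all `a ∈ L`. -/
def HasDelta {L : Type*} [Field L] (μ : DeformedProduct L) (δ : ℤ → L → L) : Prop :=
  ∀ (a : L) (i : ℤ), (μ.mul (T L 1) (single 0 a)).coeff i =
    if i = 1 then a else if i ≤ 0 then δ i a else 0

/-- Composition `δ_{j₁} ∘ ⋯ ∘ δ_{j_k}` along a list `[j₁, …, j_k]`. -/
def dcomp {L : Type*} [Field L] (δ : ℤ → L → L) : List ℤ → L → L
  | [], a => a
  | j :: js, a => δ j (dcomp δ js a)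

/-- The Leibniz-type identity (★) for the family `δ_i`, `i ≤ 0`. -/
def LeibnizStar {L : Type*} [Field L] (δ : ℤ → L → L) : Prop :=
  ∀ i : ℤ, i ≤ 0 → ∀ a b : L,
    δ i (a * b) = a * δ i b + δ i a * b +
      ∑ᶠ p : ℤ × List ℤ,
        if p.1 ≤ 0 ∧ p.2 ≠ [] ∧ (∀ j ∈ p.2, j ≤ 0) ∧
            p.2.sum - (p.2.length : ℤ) + p.1 = i
        then zbinom p.1 p.2.length • (δ p.1 a * dcomp δ p.2 b) else 0

end

/-!
Write `⋆` for the product to be constructed. Axioms (i)–(iii) force right multiplication by `T ^ j`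
to be the plain shift of exponents and left multiplication by `T` to be the operator
`λ = shift ∘ (1 + Δ)`, where `Δ (a T ^ j) = ∑ i ≤ 0, δ_i(a) T ^ (j - 1 + i)`. As `Δ` lowers degrees
and commutes with the shift, `λ` is invertible and `λ ^ i = shift ^ i ∘ ∑ k, binom(i, k) Δ ^ k`.
Hence `(∑ i, a_i T ^ i) ⋆ g = ∑ i, a_i λ ^ i(g)`, which gives uniqueness and the formula on
monomials.

Conversely this formula always defines a biadditive, degree-multiplicative, hence continuous,
product. It is associative as soon as right multiplications commute with `λ`, and since everything
commutes with shifts this reduces to `(T ⋆ a) ⋆ b = T ⋆ (a b)` for constants `a` and `b`. Comparing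
coefficients, the last identity is the Leibniz-type identity (★). It also forces `T ⋆ 1 = T`, since
`(T ⋆ 1) ⋆ 1 = T ⋆ 1` and `⋆` has no zero divisors.
-/

noncomputable section

namespace InvLaurent

variable {L : Type*} [Field L] {ι : Type*}

/-! ### The degree filtration -/

lemma coeff_single (n : ℤ) (a : L) (i : ℤ) : (single n a).coeff i = if i = n then a else 0 := rfl

/-- The coefficient of `T ^ m` as an additive map. -/
def coeffHom (m : ℤ) : InvLaurent L →+ L where
  toFun f := f.coeff m
  map_zero' := rfl
  map_add' _ _ := rfl

lemma coeff_zsmul (c : ℤ) (f : InvLaurent L) (m : ℤ) : (c • f).coeff m = c • f.coeff m :=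
  map_zsmul (coeffHom m) c f

lemma coeff_sum (s : Finset ι) (F : ι → InvLaurent L) (m : ℤ) :
    (∑ i ∈ s, F i).coeff m = ∑ i ∈ s, (F i).coeff m :=
  map_sum (coeffHom m) F s

/-- The subgroup of series without terms above `T ^ n`, that is, of degree at most `n`. -/
def degLE (n : ℤ) : AddSubgroup (InvLaurent L) where
  carrier := {f | ∀ i, n < i → f.coeff i = 0}
  zero_mem' _ _ := rfl
  add_mem' hf hg i hi := by rw [coeff_add, hf i hi, hg i hi, add_zero]
  neg_mem' hf i hi := by rw [coeff_neg, hf i hi, neg_zero]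

lemma degLE_mono : Monotone (degLE : ℤ → AddSubgroup (InvLaurent L)) :=
  fun _ _ hnm _ hf i hi => hf i (hnm.trans_lt hi)

lemma exists_mem_degLE (f : InvLaurent L) : ∃ n, f ∈ degLE n := f.bdd'

lemma single_mem_degLE (n : ℤ) (a : L) : single n a ∈ degLE n :=
  fun _ hi => if_neg hi.ne'

lemma deg_le_iff_mem_degLE {f : InvLaurent L} {n : ℤ} : deg f ≤ n ↔ f ∈ degLE n := by
  refine ⟨fun h i hi => ?_, fun h => ?_⟩
  · by_contra hfi
    exact hi.not_ge (WithBot.coe_le_coe.mp ((le_deg hfi).trans h))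
  · by_cases hf : f = 0
    · exact ((deg_eq_bot_iff f).mpr hf).trans_le bot_le
    · rw [deg, if_neg hf, WithBot.coe_le_coe]
      exact csSup_le (support_nonempty hf) fun i hi => not_lt.mp fun hni => hi (h i hni)

lemma deg_eq_of_mem_degLE {f : InvLaurent L} {n : ℤ} (hf : f ∈ degLE n) (hfn : f.coeff n ≠ 0) :
    deg f = n :=
  le_antisymm (deg_le_iff_mem_degLE.mpr hf) (le_deg hfn)

lemma exists_mem_degLE_coeff_ne_zero {f : InvLaurent L} (hf : f ≠ 0) :
    ∃ n, f ∈ degLE n ∧ f.coeff n ≠ 0 := by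
  obtain ⟨N, hN⟩ := support_bddAbove f
  obtain ⟨n, hn, hmax⟩ :=
    Int.exists_greatest_of_bdd ⟨N, fun i hi => hN hi⟩ (support_nonempty hf)
  exact ⟨n, fun i hi => by_contra fun hfi => hi.not_ge (hmax i hfi), hn⟩

lemma deg_zero : deg (0 : InvLaurent L) = ⊥ := (deg_eq_bot_iff 0).mpr rfl

/-- `F` raises degrees by at most `s`. Additive maps with this property are continuous, and they
play the role of the bounded operators on `L((T⁻¹))`. -/
def ShiftsDegree (F : AddMonoid.End (InvLaurent L)) (s : ℤ) : Prop :=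
  ∀ ⦃f n⦄, f ∈ degLE n → F f ∈ degLE (n + s)

namespace ShiftsDegree

variable {F G : AddMonoid.End (InvLaurent L)} {s t : ℤ}

lemma mono (hF : ShiftsDegree F s) (hst : s ≤ t) : ShiftsDegree F t :=
  fun _ _ hf => degLE_mono (by gcongr) (hF hf)

lemma one : ShiftsDegree (1 : AddMonoid.End (InvLaurent L)) 0 :=
  fun _ _ hf => by rwa [add_zero]

lemma mul (hF : ShiftsDegree F s) (hG : ShiftsDegree G t) : ShiftsDegree (F * G) (s + t) :=
  fun _ n hf => (by ring : n + t + s = n + (s + t)) ▸ hF (hG hf)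

lemma pow (hF : ShiftsDegree F s) (k : ℕ) : ShiftsDegree (F ^ k) (k * s) := by
  induction k with
  | zero => simpa using one
  | succ k ih => simpa [pow_succ, add_mul] using ih.mul hF

end ShiftsDegree

/-! ### Formal sums -/

/-- A family of series that tends to `0`: all but finitely many members have degree at most `n`,
for every `n`. -/
def NullFamily (F : ι → InvLaurent L) : Prop := ∀ n, {i | F i ∉ degLE n}.Finite

lemma NullFamily.finite_coeff_ne_zero {F : ι → InvLaurent L} (hF : NullFamily F) (m : ℤ) :
    (Function.support fun i => (F i).coeff m).Finite :=
  (hF (m - 1)).subset fun _ hi hmem => hi (hmem m (sub_one_lt m))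

lemma NullFamily.exists_forall_mem_degLE {F : ι → InvLaurent L} (hF : NullFamily F) :
    ∃ n, ∀ i, F i ∈ degLE n := by
  choose d hd using fun i => exists_mem_degLE (F i)
  obtain ⟨N, hN⟩ := ((hF 0).image d).bddAbove
  refine ⟨max N 0, fun i => ?_⟩
  by_cases hi : F i ∈ degLE 0
  · exact degLE_mono (le_max_right _ _) hi
  · exact degLE_mono (le_max_of_le_left (hN ⟨i, hi, rfl⟩)) (hd i)

lemma NullFamily.add {F G : ι → InvLaurent L} (hF : NullFamily F) (hG : NullFamily G) :
    NullFamily fun i => F i + G i := fun n =>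
  ((hF n).union (hG n)).subset fun i hi => by
    by_contra h
    obtain ⟨hFi, hGi⟩ := not_or.mp h
    exact hi (add_mem (not_not.mp hFi) (not_not.mp hGi))

lemma NullFamily.map {F : ι → InvLaurent L} (hF : NullFamily F)
    {G : AddMonoid.End (InvLaurent L)} {s : ℤ} (hG : ShiftsDegree G s) :
    NullFamily fun i => G (F i) := fun n =>
  (hF (n - s)).subset fun _ hi hmem => hi (sub_add_cancel n s ▸ hG hmem)

lemma NullFamily.comp_injective {κ : Type*} {F : ι → InvLaurent L} (hF : NullFamily F) {e : κ → ι}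
    (he : Function.Injective e) : NullFamily fun k => F (e k) :=
  fun n => (hF n).preimage he.injOn

lemma NullFamily.of_mem_degLE_sub {F : ℕ → InvLaurent L} {n : ℤ}
    (hF : ∀ k : ℕ, F k ∈ degLE (n - k)) : NullFamily F := fun m =>
  (Set.finite_Iio (n - m).toNat).subset fun k hk => by
    by_contra hkn
    exact hk (degLE_mono (by rw [Set.mem_Iio] at hkn; lia) (hF k))

lemma NullFamily.of_mem_degLE_add {F : ℤ → InvLaurent L} {n p : ℤ}
    (hF : ∀ i, F i ∈ degLE (i + p)) (hzero : ∀ i, n < i → F i = 0) : NullFamily F := fun m =>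
  (Set.finite_Ioc (m - p) n).subset fun i hi => by
    by_contra hin
    rcases not_and_or.mp hin with him | hni
    · exact hi (degLE_mono (by lia) (hF i))
    · exact hi (hzero i (not_le.mp hni) ▸ zero_mem _)

open scoped Classical in
/-- The coefficientwise sum of a null family; as for `tsum`, the value is `0` for other families. -/
def formalSum (F : ι → InvLaurent L) : InvLaurent L :=
  if hF : NullFamily F then
    ⟨fun m => ∑ᶠ i, (F i).coeff m, by
      obtain ⟨n, hn⟩ := hF.exists_forall_mem_degLE
      exact ⟨n, fun m hm => finsum_eq_zero_of_forall_eq_zero fun i => hn i m hm⟩⟩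
  else 0

section FormalSum

variable {F G : ι → InvLaurent L}

lemma coeff_formalSum (hF : NullFamily F) (m : ℤ) :
    (formalSum F).coeff m = ∑ᶠ i, (F i).coeff m := by
  rw [formalSum, dif_pos hF]

lemma formalSum_mem_degLE {n : ℤ} (hF : ∀ i, F i ∈ degLE n) : formalSum F ∈ degLE n := by
  by_cases h : NullFamily F
  · intro m hm
    rw [coeff_formalSum h]
    exact finsum_eq_zero_of_forall_eq_zero fun i => hF i m hm
  · rw [formalSum, dif_neg h]
    exact zero_mem _

lemma formalSum_add (hF : NullFamily F) (hG : NullFamily G) :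
    formalSum (fun i => F i + G i) = formalSum F + formalSum G := by
  ext m
  simp only [coeff_formalSum, hF, hG, hF.add hG, coeff_add]
  exact finsum_add_distrib (hF.finite_coeff_ne_zero m) (hG.finite_coeff_ne_zero m)

lemma formalSum_eq_single (i : ι) (hF : ∀ j, j ≠ i → F j = 0) : formalSum F = F i := by
  have hnull : NullFamily F := fun n => (Set.finite_singleton i).subset fun j hj => by
    by_contra hji
    exact hj (hF j hji ▸ zero_mem _)
  ext m
  rw [coeff_formalSum hnull, finsum_eq_single _ i fun j hj => by rw [hF j hj, coeff_zero]]

lemma formalSum_eq_zero_add {F : ℕ → InvLaurent L} (hF : NullFamily F) :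
    formalSum F = F 0 + formalSum fun k => F (k + 1) := by
  have hsucc : NullFamily fun k => F (k + 1) := hF.comp_injective Nat.succ_injective
  ext m
  obtain ⟨K, hK⟩ := (hF.finite_coeff_ne_zero m).bddAbove
  have hvanish : ∀ k, K < k → (F k).coeff m = 0 := fun k hk =>
    by_contra fun h => hk.not_ge (hK h)
  rw [coeff_add, coeff_formalSum hF, coeff_formalSum hsucc,
    finsum_eq_sum_of_support_subset (s := Finset.range (K + 2)),
    finsum_eq_sum_of_support_subset (s := Finset.range (K + 1)), Finset.sum_range_succ', add_comm]
  all_goals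
    intro k hk
    by_contra hk'
    rw [Finset.coe_range, Set.mem_Iio] at hk'
    exact hk (hvanish _ (by lia))

lemma formalSum_sub_sum_mem_degLE (hF : NullFamily F) (n : ℤ) :
    formalSum F - ∑ i ∈ (hF n).toFinset, F i ∈ degLE n := by
  intro m hm
  rw [coeff_sub, coeff_sum, coeff_formalSum hF, finsum_eq_sum_of_support_subset, sub_self]
  intro i hi
  rw [Set.Finite.coe_toFinset]
  exact fun hmem => hi (hmem m hm)

/-- Modulo degree `m - 1` only finitely many members of the family matter. -/
lemma map_formalSum (hF : NullFamily F) {G : AddMonoid.End (InvLaurent L)} {s : ℤ}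
    (hG : ShiftsDegree G s) : G (formalSum F) = formalSum fun i => G (F i) := by
  ext m
  have htail := hG (formalSum_sub_sum_mem_degLE hF (m - 1 - s)) m (by lia)
  rw [map_sub, coeff_sub, sub_eq_zero, map_sum, coeff_sum] at htail
  rw [htail, coeff_formalSum (hF.map hG), finsum_eq_sum_of_support_subset]
  intro i hi
  rw [Set.Finite.coe_toFinset]
  exact fun hmem => hi (hG hmem m (by lia))

end FormalSum

lemma nullFamily_single_coeff (f : InvLaurent L) : NullFamily fun i => single i (f.coeff i) := by
  obtain ⟨n, hn⟩ := exists_mem_degLE f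
  refine .of_mem_degLE_add (n := n) (p := 0) (fun i => ?_) fun i hi => ?_
  · simpa only [add_zero] using single_mem_degLE i (f.coeff i)
  · ext m
    rw [hn i hi, coeff_single, ite_self, coeff_zero]

lemma formalSum_single_coeff (f : InvLaurent L) :
    formalSum (fun i => single i (f.coeff i)) = f := by
  ext m
  rw [coeff_formalSum (nullFamily_single_coeff f), finsum_eq_single _ m, coeff_single, if_pos rfl]
  exact fun i hi => if_neg hi.symm

lemma ShiftsDegree.ext {F G : AddMonoid.End (InvLaurent L)} {s t : ℤ} (hF : ShiftsDegree F s)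
    (hG : ShiftsDegree G t) (h : ∀ i a, F (single i a) = G (single i a)) : F = G := by
  ext1 f
  rw [← formalSum_single_coeff f, map_formalSum (nullFamily_single_coeff f) hF,
    map_formalSum (nullFamily_single_coeff f) hG]
  simp only [h]

/-! ### Operators on `L((T⁻¹))` -/

section OperatorSum

variable {Φ Ψ : ℕ → AddMonoid.End (InvLaurent L)} {s : ℤ}

lemma nullFamily_apply (hΦ : ∀ k : ℕ, ShiftsDegree (Φ k) (s - k)) (f : InvLaurent L) :
    NullFamily fun k => Φ k f := by
  obtain ⟨n, hn⟩ := exists_mem_degLE f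
  exact .of_mem_degLE_sub (n := n + s) fun k => add_sub_assoc n s k ▸ hΦ k hn

/-- The pointwise sum of a sequence of operators that lower the degree more and more. -/
def operatorSum (Φ : ℕ → AddMonoid.End (InvLaurent L)) {s : ℤ}
    (hΦ : ∀ k : ℕ, ShiftsDegree (Φ k) (s - k)) : AddMonoid.End (InvLaurent L) :=
  AddMonoidHom.mk' (fun f => formalSum fun k => Φ k f) fun f g => by
    simp only [map_add, formalSum_add (nullFamily_apply hΦ f) (nullFamily_apply hΦ g)]

lemma operatorSum_apply (hΦ : ∀ k : ℕ, ShiftsDegree (Φ k) (s - k)) (f : InvLaurent L) :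
    operatorSum Φ hΦ f = formalSum fun k => Φ k f := rfl

lemma coeff_operatorSum (hΦ : ∀ k : ℕ, ShiftsDegree (Φ k) (s - k)) (f : InvLaurent L) (m : ℤ) :
    (operatorSum Φ hΦ f).coeff m = ∑ᶠ k, (Φ k f).coeff m :=
  coeff_formalSum (nullFamily_apply hΦ f) m

lemma shiftsDegree_operatorSum (hΦ : ∀ k : ℕ, ShiftsDegree (Φ k) (s - k)) :
    ShiftsDegree (operatorSum Φ hΦ) s :=
  fun _ _ hf => formalSum_mem_degLE fun k => (hΦ k).mono (by lia) hf

lemma commute_operatorSum (hΦ : ∀ k : ℕ, ShiftsDegree (Φ k) (s - k))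
    {G : AddMonoid.End (InvLaurent L)} {t : ℤ} (hG : ShiftsDegree G t)
    (hGΦ : ∀ k, Commute G (Φ k)) : Commute G (operatorSum Φ hΦ) := by
  ext1 f
  change G (operatorSum Φ hΦ f) = operatorSum Φ hΦ (G f)
  rw [operatorSum_apply, operatorSum_apply, map_formalSum (nullFamily_apply hΦ f) hG]
  exact congrArg formalSum (funext fun k => DFunLike.congr_fun (hGΦ k) f)

end OperatorSum

/-- Multiplication by `T ^ j` on the right, which is not affected by the deformation. -/
def shift (j : ℤ) : AddMonoid.End (InvLaurent L) where
  toFun f := ⟨fun m => f.coeff (m - j), by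
    obtain ⟨n, hn⟩ := f.bdd'
    exact ⟨n + j, fun m hm => hn _ (lt_sub_iff_add_lt.mpr hm)⟩⟩
  map_zero' := rfl
  map_add' _ _ := rfl

lemma coeff_shift (j : ℤ) (f : InvLaurent L) (m : ℤ) : (shift j f).coeff m = f.coeff (m - j) := rfl

lemma shift_zero : (shift 0 : AddMonoid.End (InvLaurent L)) = 1 := by
  ext f m
  rw [coeff_shift, sub_zero, AddMonoid.End.one_apply]

lemma shift_mul_shift (i j : ℤ) :
    (shift i * shift j : AddMonoid.End (InvLaurent L)) = shift (i + j) := by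
  ext f m
  exact congrArg f.coeff (sub_sub m i j)

lemma commute_shift_shift (i j : ℤ) :
    Commute (shift i : AddMonoid.End (InvLaurent L)) (shift j) := by
  rw [Commute, SemiconjBy, shift_mul_shift, shift_mul_shift, add_comm]

lemma shift_single (i j : ℤ) (a : L) : shift i (single j a) = single (i + j) a := by
  ext m
  simp only [coeff_shift, coeff_single, sub_eq_iff_eq_add, add_comm i j]

lemma single_eq_shift (j : ℤ) (a : L) : single j a = shift j (single 0 a) := by
  rw [shift_single, add_zero]

lemma shiftsDegree_shift (j : ℤ) : ShiftsDegree (shift j : AddMonoid.End (InvLaurent L)) j :=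
  fun _ _ hf m hm => hf (m - j) (lt_sub_iff_add_lt.mpr hm)

/-- The operator that applies an additive endomorphism of `L` to every coefficient. -/
def mapCoeff : AddMonoid.End L →+* AddMonoid.End (InvLaurent L) where
  toFun φ :=
    { toFun := fun f => ⟨fun m => φ (f.coeff m), by
        obtain ⟨n, hn⟩ := f.bdd'
        exact ⟨n, fun m hm => by rw [hn m hm, map_zero]⟩⟩
      map_zero' := by ext; exact map_zero φ
      map_add' := fun f g => by ext; exact map_add φ _ _ }
  map_one' := rfl
  map_mul' _ _ := rfl
  map_zero' := rfl
  map_add' _ _ := rfl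

lemma coeff_mapCoeff (φ : AddMonoid.End L) (f : InvLaurent L) (m : ℤ) :
    (mapCoeff φ f).coeff m = φ (f.coeff m) := rfl

lemma commute_shift_mapCoeff (j : ℤ) (φ : AddMonoid.End L) : Commute (shift j) (mapCoeff φ) := rfl

lemma shiftsDegree_mapCoeff (φ : AddMonoid.End L) : ShiftsDegree (mapCoeff φ) 0 :=
  fun _ _ hf m hm => by rw [coeff_mapCoeff, hf m (by rwa [add_zero] at hm), map_zero]

/-- Left multiplication by constants, `lsmul` bundled as a ring homomorphism. -/
def lsmulHom : L →+* AddMonoid.End (InvLaurent L) := mapCoeff.comp (Module.toAddMonoidEnd L L)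

lemma lsmulHom_apply (a : L) (f : InvLaurent L) : lsmulHom a f = lsmul a f := rfl

lemma coeff_lsmulHom (a : L) (f : InvLaurent L) (m : ℤ) :
    (lsmulHom a f).coeff m = a * f.coeff m := rfl

lemma lsmulHom_single (a : L) (i : ℤ) (b : L) : lsmulHom a (single i b) = single i (a * b) := by
  ext m
  rw [coeff_lsmulHom, coeff_single, coeff_single, mul_ite, mul_zero]

lemma commute_shift_lsmulHom (j : ℤ) (a : L) : Commute (shift j) (lsmulHom a) := rfl

lemma shiftsDegree_lsmulHom (a : L) : ShiftsDegree (lsmulHom a) 0 := shiftsDegree_mapCoeff _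

/-! ### Binomial powers of `1 + Δ` -/

section BinomialPower

variable {Δ : AddMonoid.End (InvLaurent L)}

lemma ShiftsDegree.zsmul_pow (hΔ : ShiftsDegree Δ (-1)) (c : ℤ) (k : ℕ) :
    ShiftsDegree (c • Δ ^ k) (0 - k) := fun _ n hf =>
  zsmul_mem ((by ring : n + (k : ℤ) * -1 = n + (0 - k)) ▸ hΔ.pow k hf) c

lemma ShiftsDegree.nullFamily_zsmul_pow (hΔ : ShiftsDegree Δ (-1)) (c : ℕ → ℤ)
    (f : InvLaurent L) : NullFamily fun k => c k • (Δ ^ k) f :=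
  nullFamily_apply (fun k => hΔ.zsmul_pow (c k) k) f

/-- The operator `(1 + Δ) ^ i = ∑ k, binom(i, k) Δ ^ k` for an integer `i`. -/
def binomialPower (hΔ : ShiftsDegree Δ (-1)) (i : ℤ) : AddMonoid.End (InvLaurent L) :=
  operatorSum (fun k => Ring.choose i k • Δ ^ k) fun k => hΔ.zsmul_pow (Ring.choose i k) k

variable (hΔ : ShiftsDegree Δ (-1))

lemma binomialPower_apply (i : ℤ) (f : InvLaurent L) :
    binomialPower hΔ i f = formalSum fun k => Ring.choose i k • (Δ ^ k) f := rfl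

lemma shiftsDegree_binomialPower (i : ℤ) : ShiftsDegree (binomialPower hΔ i) 0 :=
  shiftsDegree_operatorSum _

lemma commute_binomialPower {G : AddMonoid.End (InvLaurent L)} {t : ℤ} (hG : ShiftsDegree G t)
    (hGΔ : Commute G Δ) (i : ℤ) : Commute G (binomialPower hΔ i) :=
  commute_operatorSum _ hG fun k => (hGΔ.pow_right k).smul_right _

lemma binomialPower_eq_add (i : ℤ) (f : InvLaurent L) : binomialPower hΔ i f =
    f + formalSum fun k => Ring.choose i (k + 1) • (Δ ^ (k + 1)) f := by
  rw [binomialPower_apply,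
    formalSum_eq_zero_add (hΔ.nullFamily_zsmul_pow (Ring.choose i) f),
    Ring.choose_zero_right, one_zsmul, pow_zero, AddMonoid.End.one_apply]

lemma binomialPower_apply_of_apply_eq_zero {f : InvLaurent L} (hf : Δ f = 0) (i : ℤ) :
    binomialPower hΔ i f = f := by
  have hpow (k : ℕ) : (Δ ^ (k + 1)) f = 0 := by
    rw [pow_succ]
    exact (congrArg (Δ ^ k) hf).trans (map_zero (Δ ^ k))
  rw [binomialPower_apply, formalSum_eq_single 0, Ring.choose_zero_right, one_zsmul, pow_zero,
    AddMonoid.End.one_apply]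
  rintro (_ | k) hk
  · exact absurd rfl hk
  · rw [hpow, smul_zero]

lemma binomialPower_zero : binomialPower hΔ 0 = 1 := by
  ext1 f
  rw [binomialPower_apply, formalSum_eq_single 0, Ring.choose_zero_right, one_zsmul, pow_zero]
  rintro (_ | k) hk
  · exact absurd rfl hk
  · rw [Ring.choose_zero_succ, zero_smul]

lemma binomialPower_add_one (i : ℤ) :
    binomialPower hΔ (i + 1) = (1 + Δ) * binomialPower hΔ i := by
  ext1 f
  have hnull := hΔ.nullFamily_zsmul_pow (Ring.choose i) f
  have hΔpow (k : ℕ) :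
      Δ (Ring.choose i k • (Δ ^ k) f) = Ring.choose i k • (Δ ^ (k + 1)) f := by
    rw [map_zsmul, pow_succ']
    rfl
  have hnullΔ := hnull.map hΔ
  have hΔE := map_formalSum hnull hΔ
  simp only [hΔpow, ← binomialPower_apply hΔ] at hnullΔ hΔE
  calc binomialPower hΔ (i + 1) f
      = f + formalSum fun k => Ring.choose i k • (Δ ^ (k + 1)) f +
          Ring.choose i (k + 1) • (Δ ^ (k + 1)) f := by
        simp only [binomialPower_eq_add, Ring.choose_succ_succ, add_smul]
    _ = binomialPower hΔ i f + Δ (binomialPower hΔ i f) := by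
        rw [formalSum_add hnullΔ (hnull.comp_injective Nat.succ_injective), hΔE,
          binomialPower_eq_add]
        abel
    _ = ((1 + Δ) * binomialPower hΔ i) f := rfl

lemma binomialPower_sub_mem_degLE {f : InvLaurent L} {n : ℤ} (hf : f ∈ degLE n) (i : ℤ) :
    binomialPower hΔ i f - f ∈ degLE (n - 1) := by
  rw [binomialPower_eq_add, add_sub_cancel_left]
  refine formalSum_mem_degLE fun k => degLE_mono ?_ (hΔ.zsmul_pow _ (k + 1) hf)
  push_cast
  lia

end BinomialPower

/-! ### Left multiplication by `T` -/

lemma shiftsDegree_shift_mul_mapCoeff (φ : AddMonoid.End L) (n : ℕ) :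
    ShiftsDegree (shift (-1 - n) * mapCoeff φ) (-1 - n) := by
  simpa only [add_zero] using (shiftsDegree_shift (-1 - (n : ℤ))).mul (shiftsDegree_mapCoeff φ)

/-- The operator `Δ` with `a T ^ j ↦ ∑ n, Dₙ(a) T ^ (j - 1 - n)`, so that left multiplication by
`T` becomes `T (1 + Δ)`. Here and below, `D n` stands for `δ_{-n}`. -/
def delta (D : ℕ → AddMonoid.End L) : AddMonoid.End (InvLaurent L) :=
  operatorSum (fun n : ℕ => shift (-1 - n) * mapCoeff (D n)) fun n =>
    shiftsDegree_shift_mul_mapCoeff (D n) n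

section LeftMulT

variable (D : ℕ → AddMonoid.End L)

lemma coeff_delta (f : InvLaurent L) (m : ℤ) :
    (delta D f).coeff m = ∑ᶠ n : ℕ, D n (f.coeff (m + 1 + n)) :=
  (coeff_operatorSum _ f m).trans
    (finsum_congr fun n => congrArg (fun l => D n (f.coeff l)) (by ring))

lemma shiftsDegree_delta : ShiftsDegree (delta D) (-1) := shiftsDegree_operatorSum _

lemma commute_shift_delta (j : ℤ) : Commute (shift j) (delta D) :=
  commute_operatorSum _ (shiftsDegree_shift j) fun n =>
    (commute_shift_shift _ _).mul_right (commute_shift_mapCoeff j (D n))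

lemma commute_shift_binomialPower_delta (i j : ℤ) :
    Commute (shift j) (binomialPower (shiftsDegree_delta D) i) :=
  commute_binomialPower _ (shiftsDegree_shift j) (commute_shift_delta D j) i

/-- Left multiplication by `T`, that is `f ↦ T (f + Δ f)`, as a unit of the ring of operators. -/
def leftMulT : (AddMonoid.End (InvLaurent L))ˣ where
  val := shift 1 * (1 + delta D)
  inv := binomialPower (shiftsDegree_delta D) (-1) * shift (-1)
  val_inv := by
    have hinv : (1 + delta D) * binomialPower (shiftsDegree_delta D) (-1) = 1 := by
      rw [← binomialPower_add_one, neg_add_cancel, binomialPower_zero]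
    rw [mul_assoc, ← mul_assoc (1 + _), hinv, one_mul, shift_mul_shift, add_neg_cancel, shift_zero]
  inv_val := by
    have hcomm : Commute (1 + delta D) (binomialPower (shiftsDegree_delta D) (-1)) :=
      (Commute.one_left _).add_left
        (commute_binomialPower _ (shiftsDegree_delta D) (Commute.refl _) _)
    rw [mul_assoc, ← mul_assoc (shift (-1)), shift_mul_shift, neg_add_cancel, shift_zero, one_mul,
      ← hcomm.eq, ← binomialPower_add_one, neg_add_cancel, binomialPower_zero]

lemma eq_coe_zpow_of_add_one {M : Type*} [Monoid M] (u : Mˣ) (e : ℤ → M) (h0 : e 0 = 1)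
    (hsucc : ∀ i, e (i + 1) = u * e i) (i : ℤ) : e i = ↑(u ^ i) := by
  induction i with
  | zero => rw [h0, zpow_zero, Units.val_one]
  | succ i ih => rw [hsucc, ih, ← Units.val_mul, ← zpow_one_add, add_comm]
  | pred i ih =>
    rw [← u.mul_right_inj, ← hsucc, sub_add_cancel, ih, ← Units.val_mul, ← zpow_one_add,
      add_sub_cancel]

lemma coe_leftMulT_zpow (i : ℤ) : (↑(leftMulT D ^ i) : AddMonoid.End (InvLaurent L)) =
    shift i * binomialPower (shiftsDegree_delta D) i := by
  refine (eq_coe_zpow_of_add_one (leftMulT D)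
    (fun i => shift i * binomialPower (shiftsDegree_delta D) i) ?_ (fun i => ?_) i).symm
  · rw [shift_zero, binomialPower_zero, one_mul]
  · have hcomm : Commute (shift i) (1 + delta D) :=
      (Commute.one_right _).add_right (commute_shift_delta D i)
    change _ = shift 1 * (1 + delta D) * _
    rw [binomialPower_add_one, add_comm, ← shift_mul_shift, mul_assoc, mul_assoc,
      ← mul_assoc (shift i), hcomm.eq, mul_assoc]

lemma leftMulT_zpow_apply (i : ℤ) (f : InvLaurent L) :
    (leftMulT D ^ i).val f = shift i (binomialPower (shiftsDegree_delta D) i f) :=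
  DFunLike.congr_fun (coe_leftMulT_zpow D i) f

lemma shiftsDegree_leftMulT_zpow (i : ℤ) : ShiftsDegree (leftMulT D ^ i).val i := by
  simpa only [coe_leftMulT_zpow, add_zero] using
    (shiftsDegree_shift i).mul (shiftsDegree_binomialPower (shiftsDegree_delta D) i)

lemma shiftsDegree_leftMulT : ShiftsDegree (leftMulT D).val 1 := by
  simpa only [zpow_one] using shiftsDegree_leftMulT_zpow D 1

lemma coeff_leftMulT_zpow {f : InvLaurent L} {n : ℤ} (hf : f ∈ degLE n) (i : ℤ) :
    ((leftMulT D ^ i).val f).coeff (i + n) = f.coeff n := by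
  have hlower := binomialPower_sub_mem_degLE (shiftsDegree_delta D) hf i n (sub_one_lt n)
  rw [coeff_sub, sub_eq_zero] at hlower
  rw [leftMulT_zpow_apply, coeff_shift, add_sub_cancel_left, hlower]

lemma commute_shift_leftMulT (j : ℤ) : Commute (shift j) (leftMulT D).val :=
  (commute_shift_shift j 1).mul_right
    ((Commute.one_right _).add_right (commute_shift_delta D j))

end LeftMulT

/-! ### The deformed product -/

section DeformedMul

variable (D : ℕ → AddMonoid.End L)

lemma lsmulHom_leftMulT_zpow_mem_degLE {g : InvLaurent L} {p : ℤ} (hg : g ∈ degLE p) (a : L)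
    (i : ℤ) : lsmulHom a ((leftMulT D ^ i).val g) ∈ degLE (i + p) := by
  have hmem := (shiftsDegree_lsmulHom a).mul (shiftsDegree_leftMulT_zpow D i) hg
  rwa [zero_add, add_comm] at hmem

lemma nullFamily_lsmulHom_leftMulT_zpow (f g : InvLaurent L) :
    NullFamily fun i => lsmulHom (f.coeff i) ((leftMulT D ^ i).val g) := by
  obtain ⟨n, hn⟩ := exists_mem_degLE f
  obtain ⟨p, hp⟩ := exists_mem_degLE g
  refine .of_mem_degLE_add (n := n) (fun i => lsmulHom_leftMulT_zpow_mem_degLE D hp _ i)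
    fun i hi => ?_
  rw [hn i hi, map_zero, AddMonoid.End.zero_apply]

/-- The product `(∑ i, aᵢ T ^ i) ⋆ g = ∑ i, aᵢ (T ^ i ⋆ g)` in which `T ⋆ ·` is `leftMulT D`. -/
def deformedMul : InvLaurent L →+ AddMonoid.End (InvLaurent L) :=
  AddMonoidHom.mk' (fun f => AddMonoidHom.mk'
    (fun g => formalSum fun i => lsmulHom (f.coeff i) ((leftMulT D ^ i).val g)) fun g h => by
      simp only [map_add, formalSum_add (nullFamily_lsmulHom_leftMulT_zpow D f g)
        (nullFamily_lsmulHom_leftMulT_zpow D f h)]) fun f g => by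
    ext1 h
    change formalSum _ = formalSum _ + formalSum _
    rw [← formalSum_add (nullFamily_lsmulHom_leftMulT_zpow D f h)
      (nullFamily_lsmulHom_leftMulT_zpow D g h)]
    simp only [coeff_add, map_add]
    rfl

lemma deformedMul_apply (f g : InvLaurent L) : deformedMul D f g =
    formalSum fun i => lsmulHom (f.coeff i) ((leftMulT D ^ i).val g) := rfl

lemma coeff_deformedMul (f g : InvLaurent L) (m : ℤ) : (deformedMul D f g).coeff m =
    ∑ᶠ i, f.coeff i * ((leftMulT D ^ i).val g).coeff m :=
  coeff_formalSum (nullFamily_lsmulHom_leftMulT_zpow D f g) m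

lemma deformedMul_single (i : ℤ) (a : L) :
    deformedMul D (single i a) = lsmulHom a * (leftMulT D ^ i).val := by
  ext1 g
  rw [deformedMul_apply, formalSum_eq_single i fun j hj => by
    rw [coeff_single, if_neg hj, map_zero, AddMonoid.End.zero_apply], coeff_single, if_pos rfl]
  rfl

lemma deformedMul_single_zero (a : L) : deformedMul D (single 0 a) = lsmulHom a := by
  rw [deformedMul_single, zpow_zero, Units.val_one, mul_one]

variable {f g : InvLaurent L} {n p : ℤ}

lemma deformedMul_mem_degLE (hf : f ∈ degLE n) (hg : g ∈ degLE p) :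
    deformedMul D f g ∈ degLE (n + p) := by
  refine formalSum_mem_degLE fun i => ?_
  by_cases hi : n < i
  · rw [hf i hi, map_zero]
    exact zero_mem _
  · exact degLE_mono (by lia) (lsmulHom_leftMulT_zpow_mem_degLE D hg _ i)

lemma shiftsDegree_deformedMul (hf : f ∈ degLE n) : ShiftsDegree (deformedMul D f) n :=
  fun _ p hg => add_comm n p ▸ deformedMul_mem_degLE D hf hg

/-- Right multiplication `f ↦ f ⋆ g`. -/
def deformedMulRight (g : InvLaurent L) : AddMonoid.End (InvLaurent L) := (deformedMul D).flip g

lemma deformedMulRight_apply (f g : InvLaurent L) :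
    deformedMulRight D g f = deformedMul D f g := rfl

lemma shiftsDegree_deformedMulRight (hg : g ∈ degLE p) : ShiftsDegree (deformedMulRight D g) p :=
  fun _ _ hf => deformedMul_mem_degLE D hf hg

lemma coeff_deformedMul_add (hf : f ∈ degLE n) (hg : g ∈ degLE p) :
    (deformedMul D f g).coeff (n + p) = f.coeff n * g.coeff p := by
  rw [coeff_deformedMul, finsum_eq_single _ n, coeff_leftMulT_zpow D hg]
  intro i hin
  rcases hin.lt_or_gt with hlt | hgt
  · rw [shiftsDegree_leftMulT_zpow D i hg (n + p) (by lia), mul_zero]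
  · rw [hf i hgt, zero_mul]

lemma deg_deformedMul (f g : InvLaurent L) : deg (deformedMul D f g) = deg f + deg g := by
  by_cases hf : f = 0
  · rw [hf, map_zero, AddMonoid.End.zero_apply, deg_zero, WithBot.bot_add]
  by_cases hg : g = 0
  · rw [hg, map_zero, deg_zero, WithBot.add_bot]
  obtain ⟨n, hn, hfn⟩ := exists_mem_degLE_coeff_ne_zero hf
  obtain ⟨p, hp, hgp⟩ := exists_mem_degLE_coeff_ne_zero hg
  rw [deg_eq_of_mem_degLE hn hfn, deg_eq_of_mem_degLE hp hgp, ← WithBot.coe_add]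
  refine deg_eq_of_mem_degLE (deformedMul_mem_degLE D hn hp) ?_
  rw [coeff_deformedMul_add D hn hp]
  exact mul_ne_zero hfn hgp

end DeformedMul

section Associativity

variable {D : ℕ → AddMonoid.End L}

lemma commute_deformedMul {G : AddMonoid.End (InvLaurent L)} {t : ℤ} (hG : ShiftsDegree G t)
    (hsmul : ∀ a, Commute G (lsmulHom a)) (hT : Commute G (leftMulT D).val) (f : InvLaurent L) :
    Commute G (deformedMul D f) := by
  ext1 g
  change G (deformedMul D f g) = deformedMul D f (G g)
  rw [deformedMul_apply, deformedMul_apply,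
    map_formalSum (nullFamily_lsmulHom_leftMulT_zpow D f g) hG]
  exact congrArg formalSum (funext fun i =>
    DFunLike.congr_fun ((hsmul (f.coeff i)).mul_right (hT.units_zpow_right i)) g)

variable (D) in
lemma commute_shift_deformedMul (j : ℤ) (f : InvLaurent L) :
    Commute (shift j) (deformedMul D f) :=
  commute_deformedMul (shiftsDegree_shift j) (commute_shift_lsmulHom j)
    (commute_shift_leftMulT D j) f

lemma deformedMul_shift (j : ℤ) (f g : InvLaurent L) :
    deformedMul D (shift j f) g = deformedMul D f ((leftMulT D ^ j).val g) := by
  ext m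
  rw [coeff_deformedMul, coeff_deformedMul, ← finsum_comp_equiv (Equiv.addRight j)]
  refine finsum_congr fun i => ?_
  rw [Equiv.coe_addRight, coeff_shift, add_sub_cancel_right, zpow_add, Units.val_mul]
  rfl

lemma deformedMul_lsmulHom (a : L) (f g : InvLaurent L) :
    deformedMul D (lsmulHom a f) g = lsmulHom a (deformedMul D f g) := by
  rw [deformedMul_apply, deformedMul_apply,
    map_formalSum (nullFamily_lsmulHom_leftMulT_zpow D f g) (shiftsDegree_lsmulHom a)]
  simp only [coeff_lsmulHom, map_mul]
  rfl

variable (D) in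
/-- The identity `(T ⋆ a) ⋆ b = T ⋆ (a ⋆ b)` for constants `a` and `b`. -/
def AssociativeOnConstants : Prop :=
  ∀ a b : L, deformedMul D ((leftMulT D).val (single 0 a)) (single 0 b) =
    (leftMulT D).val (single 0 (a * b))

lemma deformedMul_leftMulT_single_zero (hD : AssociativeOnConstants D) (a : L) :
    deformedMul D ((leftMulT D).val (single 0 a)) = (leftMulT D).val * lsmulHom a := by
  refine ShiftsDegree.ext
    (shiftsDegree_deformedMul D (shiftsDegree_leftMulT D (single_mem_degLE 0 a)))
    ((shiftsDegree_leftMulT D).mul (shiftsDegree_lsmulHom a)) fun j b => ?_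
  have hleft := DFunLike.congr_fun
    (commute_shift_deformedMul D j ((leftMulT D).val (single 0 a))) (single 0 b)
  have hright := DFunLike.congr_fun
    ((commute_shift_leftMulT D j).mul_right (commute_shift_lsmulHom j a)) (single 0 b)
  rw [single_eq_shift j]
  refine hleft.symm.trans (Eq.trans (congrArg (shift j) ?_) hright)
  exact (hD a b).trans (congrArg (leftMulT D).val (lsmulHom_single a 0 b).symm)

lemma commute_deformedMulRight_leftMulT (hD : AssociativeOnConstants D) (g : InvLaurent L) :
    Commute (deformedMulRight D g) (leftMulT D).val := by
  obtain ⟨p, hp⟩ := exists_mem_degLE g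
  refine ShiftsDegree.ext ((shiftsDegree_deformedMulRight D hp).mul (shiftsDegree_leftMulT D))
    ((shiftsDegree_leftMulT D).mul (shiftsDegree_deformedMulRight D hp)) fun i a => ?_
  have hshift := DFunLike.congr_fun (commute_shift_leftMulT D i) (single 0 a)
  calc deformedMul D ((leftMulT D).val (single i a)) g
      = deformedMul D (shift i ((leftMulT D).val (single 0 a))) g := by
        rw [single_eq_shift i a]
        exact congrArg (deformedMul D · g) hshift.symm
    _ = (leftMulT D).val (lsmulHom a ((leftMulT D ^ i).val g)) := by
        rw [deformedMul_shift, deformedMul_leftMulT_single_zero hD]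
        rfl
    _ = (leftMulT D).val (deformedMul D (single i a) g) := by
        rw [deformedMul_single]
        rfl

/-- Associativity says that right multiplications commute with left multiplications, and the
latter are generated by constants and `T`. -/
lemma deformedMul_assoc (hD : AssociativeOnConstants D) (f g h : InvLaurent L) :
    deformedMul D (deformedMul D f g) h = deformedMul D f (deformedMul D g h) := by
  obtain ⟨p, hp⟩ := exists_mem_degLE h
  have hsmul (a : L) : Commute (deformedMulRight D h) (lsmulHom a) := by
    ext1 x
    exact deformedMul_lsmulHom a x h
  exact DFunLike.congr_fun (commute_deformedMul (shiftsDegree_deformedMulRight D hp) hsmul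
    (commute_deformedMulRight_leftMulT hD h) f) g

end Associativity

/-! ### Coefficients as sums over tuples of nonpositive integers -/

lemma zbinom_eq_ringChoose (n : ℤ) (k : ℕ) : zbinom n k = Ring.choose n k := by
  rw [zbinom]
  split_ifs with hn
  · lift n to ℕ using hn
    rw [Int.toNat_natCast, Ring.choose_natCast]
  · obtain ⟨m, rfl⟩ : ∃ m : ℕ, n = -m := ⟨n.natAbs, by lia⟩
    rw [Ring.choose_neg, show (m : ℤ) + k - 1 = (m + k - 1 : ℕ) by lia, Ring.choose_natCast,
      Int.negOnePow_def, Units.smul_def, show ((k : ℤ) - 1 - -m).toNat = m + k - 1 by lia]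
    simp

lemma cast_sum_map_one_sub_toNat {js : List ℤ} (hjs : ∀ j ∈ js, j ≤ 0) :
    (((js.map fun j => (1 - j).toNat).sum : ℕ) : ℤ) = js.length - js.sum := by
  induction js with
  | nil => rfl
  | cons j js ih =>
    rw [List.forall_mem_cons] at hjs
    rw [List.map_cons, List.sum_cons, Nat.cast_add, ih hjs.2, List.length_cons, List.sum_cons]
    lia

/-- Subtracting the entries from `1` turns such tuples into compositions of `-m`. -/
lemma finite_tuplesOfDegree (m : ℤ) :
    {js : List ℤ | (∀ j ∈ js, j ≤ 0) ∧ js.sum - js.length = m}.Finite := by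
  refine (Set.finite_range fun c : Composition (-m).toNat =>
    c.blocks.map fun n : ℕ => 1 - (n : ℤ)).subset ?_
  rintro js ⟨hnonpos, hdeg⟩
  refine ⟨⟨js.map fun j => (1 - j).toNat, fun hi => ?_, ?_⟩, ?_⟩
  · obtain ⟨j, hj, rfl⟩ := List.mem_map.mp hi
    have := hnonpos j hj
    lia
  · have := cast_sum_map_one_sub_toNat hnonpos
    lia
  · refine List.map_map.trans ((List.map_congr_left fun j hj => ?_).trans (List.map_id js))
    have := hnonpos j hj
    grind

/-- The finite set of tuples `(j₁, …, j_k)` of nonpositive integers, of arbitrary length `k`, with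
`j₁ + ⋯ + j_k - k = m`. -/
def tuplesOfDegree (m : ℤ) : Finset (List ℤ) := (finite_tuplesOfDegree m).toFinset

lemma mem_tuplesOfDegree {m : ℤ} {js : List ℤ} :
    js ∈ tuplesOfDegree m ↔ (∀ j ∈ js, j ≤ 0) ∧ js.sum - js.length = m :=
  Set.Finite.mem_toFinset _

lemma nil_mem_tuplesOfDegree {m : ℤ} : [] ∈ tuplesOfDegree m ↔ m = 0 := by
  simp [mem_tuplesOfDegree, eq_comm]

lemma cons_mem_tuplesOfDegree {m j : ℤ} {js : List ℤ} :
    j :: js ∈ tuplesOfDegree m ↔ j ≤ 0 ∧ js ∈ tuplesOfDegree (m + 1 + -j) := by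
  rw [mem_tuplesOfDegree, mem_tuplesOfDegree, List.forall_mem_cons, List.sum_cons,
    List.length_cons, Nat.cast_add_one]
  lia

lemma le_zero_of_mem_tuplesOfDegree {m : ℤ} {js : List ℤ} (hjs : js ∈ tuplesOfDegree m) :
    m ≤ 0 := by
  rw [mem_tuplesOfDegree] at hjs
  have := cast_sum_map_one_sub_toNat hjs.1
  lia

lemma sum_tuplesOfDegree_eq_add {M : Type*} [AddCommMonoid M] (m : ℤ) (F : List ℤ → M) :
    ∑ js ∈ tuplesOfDegree m, F js =
      (if m = 0 then F [] else 0) + ∑ js ∈ (tuplesOfDegree m).erase [], F js := by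
  split_ifs with hm
  · exact (Finset.add_sum_erase _ _ (nil_mem_tuplesOfDegree.mpr hm)).symm
  · rw [zero_add, Finset.erase_eq_of_notMem (mt nil_mem_tuplesOfDegree.mp hm)]

lemma sum_tuplesOfDegree_length_add_one {M : Type*} [AddCommMonoid M] (m : ℤ) (k : ℕ)
    (F : List ℤ → M) :
    ∑ js ∈ tuplesOfDegree m with js.length = k + 1, F js =
      ∑ n ∈ Finset.range (-m).toNat,
        ∑ js ∈ tuplesOfDegree (m + 1 + n) with js.length = k, F (-n :: js) := by
  rw [Finset.sum_sigma']
  symm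
  refine Finset.sum_nbij (fun p => -(p.1 : ℤ) :: p.2) ?_ ?_ ?_ fun _ _ => rfl
  · rintro ⟨n, js⟩ hp
    simp only [Finset.mem_sigma, Finset.mem_filter] at hp ⊢
    rw [cons_mem_tuplesOfDegree, neg_neg, List.length_cons, hp.2.2]
    exact ⟨⟨by lia, hp.2.1⟩, rfl⟩
  · rintro ⟨n₁, js₁⟩ - ⟨n₂, js₂⟩ - h
    simpa using h
  · rintro (_ | ⟨j, js⟩) hjs <;>
      simp only [Finset.coe_filter, Set.mem_ofPred_eq, List.length_cons, List.length_nil] at hjs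
    · lia
    · obtain ⟨hj, hmem⟩ := cons_mem_tuplesOfDegree.mp hjs.1
      have := le_zero_of_mem_tuplesOfDegree hmem
      lift -j to ℕ using by lia with n hn
      refine ⟨⟨n, js⟩, ?_, by simp [hn]⟩
      simp only [Finset.coe_sigma, Set.mem_sigma_iff, Finset.coe_filter, Set.mem_ofPred_eq,
        Finset.coe_range, Set.mem_Iio]
      exact ⟨by lia, hmem, by lia⟩

lemma finsum_ite_eq_sum {α M : Type*} [AddCommMonoid M] (s : Finset α) {P : α → Prop}
    [DecidablePred P] (hP : ∀ x, P x ↔ x ∈ s) (F : α → M) :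
    ∑ᶠ x, (if P x then F x else 0) = ∑ x ∈ s, F x := by
  rw [finsum_eq_sum_of_support_subset (s := s)]
  · exact Finset.sum_congr rfl fun x hx => if_pos ((hP x).mpr hx)
  · intro x hx
    by_contra hxs
    exact hx (if_neg (mt (hP x).mp hxs))

lemma finsum_prod_ite_eq_sum_sum {α β M : Type*} [AddCommMonoid M] (s : Finset α)
    (t : α → Finset β) {P : α × β → Prop} [DecidablePred P]
    (hP : ∀ x y, P (x, y) ↔ x ∈ s ∧ y ∈ t x) (F : α × β → M) :
    ∑ᶠ p, (if P p then F p else 0) = ∑ x ∈ s, ∑ y ∈ t x, F (x, y) := by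
  rw [finsum_ite_eq_sum ((s.sigma t).map (Equiv.sigmaEquivProd α β).toEmbedding),
    Finset.sum_map, Finset.sum_sigma]
  · rfl
  · simp [hP]

/-- The maps `δ_i` with `i ≤ 0` are additive, being the maps `δ_{-n} = D n`. -/
def RepresentsDelta (D : ℕ → AddMonoid.End L) (δ : ℤ → L → L) : Prop :=
  ∀ (n : ℕ) (a : L), δ (-n) a = D n a

section Coefficients

variable {D : ℕ → AddMonoid.End L} {δ : ℤ → L → L}

lemma coeff_delta_pow_single_zero (hδ : RepresentsDelta D δ) (b : L) (k : ℕ) (m : ℤ) :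
    ((delta D ^ k) (single 0 b)).coeff m =
      ∑ js ∈ tuplesOfDegree m with js.length = k, dcomp δ js b := by
  induction k generalizing m with
  | zero =>
    rw [pow_zero, AddMonoid.End.one_apply, coeff_single, Finset.sum_filter,
      sum_tuplesOfDegree_eq_add, if_pos List.length_nil, Finset.sum_eq_zero, add_zero]
    · rfl
    · exact fun js hjs => if_neg (mt List.length_eq_zero_iff.mp (Finset.ne_of_mem_erase hjs))
  | succ k ih =>
    have hD (n : ℕ) : D n (((delta D ^ k) (single 0 b)).coeff (m + 1 + n)) =
        ∑ js ∈ tuplesOfDegree (m + 1 + n) with js.length = k, dcomp δ (-n :: js) b := by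
      rw [ih, map_sum]
      exact Finset.sum_congr rfl fun js _ => (hδ n _).symm
    rw [pow_succ', sum_tuplesOfDegree_length_add_one]
    refine (coeff_delta D _ m).trans ((finsum_congr hD).trans ?_)
    rw [finsum_eq_sum_of_support_subset (s := Finset.range (-m).toNat)]
    intro n hn
    obtain ⟨js, hjs, -⟩ := Finset.exists_ne_zero_of_sum_ne_zero hn
    have := le_zero_of_mem_tuplesOfDegree (Finset.mem_filter.mp hjs).1
    rw [Finset.coe_range, Set.mem_Iio]
    lia

lemma coeff_binomialPower_delta_single_zero (hδ : RepresentsDelta D δ) (i : ℤ) (b : L)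
    (m : ℤ) : (binomialPower (shiftsDegree_delta D) i (single 0 b)).coeff m =
      ∑ js ∈ tuplesOfDegree m, Ring.choose i js.length • dcomp δ js b := by
  have hk (k : ℕ) : (Ring.choose i k • (delta D ^ k) (single 0 b)).coeff m =
      ∑ js ∈ tuplesOfDegree m with js.length = k, Ring.choose i js.length • dcomp δ js b := by
    rw [coeff_zsmul, coeff_delta_pow_single_zero hδ, Finset.smul_sum]
    exact Finset.sum_congr rfl fun js hjs => by rw [(Finset.mem_filter.mp hjs).2]
  rw [binomialPower_apply, coeff_formalSum ((shiftsDegree_delta D).nullFamily_zsmul_pow _ _),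
    finsum_congr hk,
    finsum_eq_sum_of_support_subset (s := (tuplesOfDegree m).image List.length),
    Finset.sum_fiberwise_of_maps_to fun js hjs => Finset.mem_image_of_mem _ hjs]
  intro k hk
  by_contra hkm
  refine hk (Finset.sum_eq_zero fun js hjs => absurd ?_ hkm)
  obtain ⟨hmem, rfl⟩ := Finset.mem_filter.mp hjs
  exact Finset.mem_coe.mpr (Finset.mem_image_of_mem _ hmem)

lemma coeff_leftMulT_zpow_single (hδ : RepresentsDelta D δ) (i j : ℤ) (b : L) (m : ℤ) :
    ((leftMulT D ^ i).val (single j b)).coeff m = (if m = i + j then b else 0) +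
      ∑ js ∈ (tuplesOfDegree (m - (i + j))).erase [], Ring.choose i js.length • dcomp δ js b := by
  have hshift := congrArg (·.coeff (m - i))
    (DFunLike.congr_fun (commute_shift_binomialPower_delta D i j) (single 0 b))
  rw [leftMulT_zpow_apply, coeff_shift, single_eq_shift]
  refine hshift.symm.trans ?_
  refine (coeff_binomialPower_delta_single_zero hδ i b (m - i - j)).trans ?_
  rw [sub_sub, sum_tuplesOfDegree_eq_add, List.length_nil, Ring.choose_zero_right, one_zsmul]
  simp only [sub_eq_zero, dcomp]

lemma coeff_delta_single_zero (hδ : RepresentsDelta D δ) (a : L) (m : ℤ) :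
    (delta D (single 0 a)).coeff m = if m < 0 then δ (m + 1) a else 0 := by
  rw [coeff_delta]
  split_ifs with hm
  · obtain ⟨k, rfl⟩ : ∃ k : ℕ, m = -k - 1 := ⟨(-(m + 1)).toNat, by lia⟩
    rw [finsum_eq_single _ k fun n hn => by rw [coeff_single, if_neg (by lia), map_zero],
      coeff_single, if_pos (by ring), ← hδ, sub_add_cancel]
  · exact finsum_eq_zero_of_forall_eq_zero fun n => by
      rw [coeff_single, if_neg (by lia), map_zero]

lemma coeff_leftMulT_single_zero (hδ : RepresentsDelta D δ) (a : L) (m : ℤ) :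
    ((leftMulT D).val (single 0 a)).coeff m =
      if m = 1 then a else if m ≤ 0 then δ m a else 0 := by
  change (shift 1 (single 0 a + delta D (single 0 a))).coeff m = _
  rw [coeff_shift, coeff_add, coeff_single, coeff_delta_single_zero hδ, sub_add_cancel]
  split_ifs <;> first | lia | simp

end Coefficients

/-! ### Continuity -/

lemma edeg_add (d e : WithBot ℤ) : edeg (d + e) = edeg d * edeg e := by
  cases d with
  | bot => exact (zero_mul _).symm
  | coe m =>
    cases e with
    | bot => exact (mul_zero _).symm
    | coe n => exact (congrArg Real.exp (Int.cast_add m n)).trans (Real.exp_add m n)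

lemma dist_eq_edeg_deg_sub (f g : InvLaurent L) : dist f g = edeg (deg (f - g)) := rfl

lemma continuous_of_deg_apply (B : InvLaurent L →+ AddMonoid.End (InvLaurent L))
    (hB : ∀ f g, deg (B f g) = deg f + deg g) :
    Continuous fun p : InvLaurent L × InvLaurent L => B p.1 p.2 := by
  have hdist (f f' g : InvLaurent L) : dist (B f g) (B f' g) = dist f f' * dist g 0 := by
    simp only [dist_eq_edeg_deg_sub, sub_zero, ← edeg_add, ← hB, map_sub]
    rfl
  have hdist' (f g g' : InvLaurent L) : dist (B f g) (B f g') = dist f 0 * dist g g' := by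
    simp only [dist_eq_edeg_deg_sub, sub_zero, ← edeg_add, ← hB, map_sub]
  refine continuous_iff_continuousAt.mpr fun ⟨f₀, g₀⟩ =>
    tendsto_iff_dist_tendsto_zero.mpr ?_
  have hbound : Continuous fun p : InvLaurent L × InvLaurent L =>
      dist p.1 f₀ * dist p.2 0 + dist f₀ 0 * dist p.2 g₀ := by fun_prop
  refine squeeze_zero (fun _ => dist_nonneg) (fun p => ?_) (hbound.tendsto' (f₀, g₀) 0 (by simp))
  exact (dist_triangle _ (B f₀ p.2) _).trans_eq (by rw [hdist, hdist'])

/-! ### The Leibniz identity as associativity -/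

section Leibniz

lemma leibnizStar_iff {δ : ℤ → L → L} : LeibnizStar δ ↔ ∀ m ≤ 0, ∀ a b : L,
    δ m (a * b) = a * δ m b + δ m a * b + ∑ l ∈ Finset.Icc m 0,
      ∑ js ∈ (tuplesOfDegree (m - l)).erase [],
        Ring.choose l js.length • (δ l a * dcomp δ js b) := by
  refine forall₄_congr fun m _ a b => ?_
  rw [finsum_prod_ite_eq_sum_sum (Finset.Icc m 0) fun l => (tuplesOfDegree (m - l)).erase []]
  · simp only [zbinom_eq_ringChoose]
  · intro l js
    have hle : js ∈ tuplesOfDegree (m - l) → m - l ≤ 0 := le_zero_of_mem_tuplesOfDegree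
    rw [Finset.mem_Icc, Finset.mem_erase]
    rw [mem_tuplesOfDegree, eq_sub_iff_add_eq] at hle ⊢
    constructor
    · rintro ⟨hl, hne, hmem⟩
      exact ⟨⟨sub_nonpos.mp (hle hmem), hl⟩, hne, hmem⟩
    · rintro ⟨⟨-, hl⟩, hne, hmem⟩
      exact ⟨hl, hne, hmem⟩

variable {D : ℕ → AddMonoid.End L} {δ : ℤ → L → L}

lemma coeff_deformedMul_leftMulT_single_zero (hδ : RepresentsDelta D δ) {m : ℤ}
    (hm : m ≤ 0) (a b : L) :
    (deformedMul D ((leftMulT D).val (single 0 a)) (single 0 b)).coeff m =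
      a * δ m b + δ m a * b + ∑ l ∈ Finset.Icc m 0,
        ∑ js ∈ (tuplesOfDegree (m - l)).erase [],
          Ring.choose l js.length • (δ l a * dcomp δ js b) := by
  have hT : a * ((leftMulT D ^ (1 : ℤ)).val (single 0 b)).coeff m = a * δ m b := by
    rw [zpow_one, coeff_leftMulT_single_zero hδ, if_neg (by lia), if_pos hm]
  have hsum (l : ℤ) (hl : l ∈ Finset.Icc m 0) :
      ((leftMulT D).val (single 0 a)).coeff l * ((leftMulT D ^ l).val (single 0 b)).coeff m =
        (if m = l then δ l a * b else 0) + ∑ js ∈ (tuplesOfDegree (m - l)).erase [],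
          Ring.choose l js.length • (δ l a * dcomp δ js b) := by
    rw [Finset.mem_Icc] at hl
    rw [coeff_leftMulT_single_zero hδ, if_neg (by lia), if_pos hl.2,
      coeff_leftMulT_zpow_single hδ, add_zero, mul_add, mul_ite, mul_zero, Finset.mul_sum]
    simp only [mul_smul_comm]
  rw [coeff_deformedMul, finsum_eq_sum_of_support_subset (s := insert 1 (Finset.Icc m 0)),
    Finset.sum_insert (by simp), Finset.sum_congr rfl hsum, Finset.sum_add_distrib,
    Finset.sum_ite_eq, if_pos (Finset.mem_Icc.mpr ⟨le_rfl, hm⟩),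
    coeff_leftMulT_single_zero hδ, if_pos rfl, hT, add_assoc]
  intro l hl
  by_contra hlm
  simp only [Finset.coe_insert, Finset.coe_Icc, Set.mem_insert_iff, Set.mem_Icc] at hlm
  rcases lt_or_ge l m with hlt | hge
  · refine hl (mul_eq_zero_of_right _ ?_)
    exact shiftsDegree_leftMulT_zpow D l (single_mem_degLE 0 b) m (by lia)
  · refine hl (mul_eq_zero_of_left ?_ _)
    rw [coeff_leftMulT_single_zero hδ, if_neg (by lia), if_neg (by lia)]

/-- Only the coefficients of `T ^ m` with `m ≤ 0` carry information. -/
lemma associativeOnConstants_iff_leibnizStar (hδ : RepresentsDelta D δ) :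
    AssociativeOnConstants D ↔ LeibnizStar δ := by
  have hcoeff (m : ℤ) (hm : m ≤ 0) (c : L) :
      ((leftMulT D).val (single 0 c)).coeff m = δ m c := by
    rw [coeff_leftMulT_single_zero hδ, if_neg (by lia), if_pos hm]
  rw [leibnizStar_iff]
  refine ⟨fun hD m hm a b => ?_, fun hL a b => ?_⟩
  · rw [← coeff_deformedMul_leftMulT_single_zero hδ hm, hD, hcoeff m hm]
  · have hTa := shiftsDegree_leftMulT D (single_mem_degLE 0 a)
    ext m
    rcases lt_trichotomy m 1 with hlt | rfl | hgt
    · have hm : m ≤ 0 := by lia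
      rw [coeff_deformedMul_leftMulT_single_zero hδ hm, ← hL m hm, hcoeff m hm]
    · refine (coeff_deformedMul_add D hTa (single_mem_degLE 0 b)).trans ?_
      rw [zero_add, coeff_leftMulT_single_zero hδ, coeff_leftMulT_single_zero hδ,
        if_pos rfl, if_pos rfl, coeff_single, if_pos rfl]
    · rw [deformedMul_mem_degLE D hTa (single_mem_degLE 0 b) m (by lia),
        shiftsDegree_leftMulT D (single_mem_degLE 0 (a * b)) m (by lia)]

end Leibniz

/-! ### Existence of the deformed product -/

section Existence

variable {D : ℕ → AddMonoid.End L}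

lemma deformedMulRight_injective {g : InvLaurent L} (hg : g ≠ 0) :
    Function.Injective (deformedMulRight D g) := by
  refine (injective_iff_map_eq_zero _).mpr fun f hf => ?_
  have hdeg := deg_deformedMul D f g
  rw [← deformedMulRight_apply, hf, deg_zero, eq_comm, WithBot.add_eq_bot, deg_eq_bot_iff,
    deg_eq_bot_iff] at hdeg
  exact hdeg.resolve_right hg

lemma deformedMul_T (i : ℤ) : deformedMul D (T L i) = (leftMulT D ^ i).val := by
  rw [T, deformedMul_single, map_one, one_mul]

/-- Both sides become `T ⋆ 1` after right multiplication by `1`. -/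
lemma leftMulT_T_zero (hD : AssociativeOnConstants D) : (leftMulT D).val (T L 0) = T L 1 := by
  have hT : T L 0 ≠ 0 := fun h => one_ne_zero (congrArg (·.coeff 0) h)
  refine deformedMulRight_injective (D := D) hT ((hD 1 1).trans ?_)
  rw [mul_one, deformedMulRight_apply, deformedMul_T, zpow_one, T]

lemma delta_T (hD : AssociativeOnConstants D) (j : ℤ) : delta D (T L j) = 0 := by
  have hzero : delta D (T L 0) = 0 := by
    ext m
    have hcoeff : (T L 0 + delta D (T L 0)).coeff (m + 1 - 1) = (T L 1).coeff (m + 1) :=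
      congrArg (·.coeff (m + 1)) (leftMulT_T_zero hD)
    simpa [T, coeff_single] using hcoeff
  rw [T, single_eq_shift]
  refine (DFunLike.congr_fun (commute_shift_delta D j) (T L 0)).symm.trans ?_
  exact (congrArg (shift j) hzero).trans (map_zero (shift j))

lemma deformedMul_T_T (hD : AssociativeOnConstants D) (i j : ℤ) :
    deformedMul D (T L i) (T L j) = T L (i + j) := by
  rw [deformedMul_T, leftMulT_zpow_apply, binomialPower_apply_of_apply_eq_zero _ (delta_T hD j)]
  exact shift_single i j 1

/-- `deformedMul D` as a `DeformedProduct`. -/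
def AssociativeOnConstants.deformedProduct (hD : AssociativeOnConstants D) :
    DeformedProduct L where
  mul f g := deformedMul D f g
  mul_assoc := deformedMul_assoc hD
  left_distrib f := map_add (deformedMul D f)
  right_distrib f g h := DFunLike.congr_fun (map_add (deformedMul D) f g) h
  continuous_mul := continuous_of_deg_apply (deformedMul D) (deg_deformedMul D)
  lsmul_eq b f := DFunLike.congr_fun (deformedMul_single_zero D b) f
  T_mul_T := deformedMul_T_T hD
  deg_mul := deg_deformedMul D

lemma AssociativeOnConstants.hasDelta_deformedProduct (hD : AssociativeOnConstants D)
    {δ : ℤ → L → L} (hδ : RepresentsDelta D δ) :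
    HasDelta hD.deformedProduct δ := fun a m => by
  have hT : hD.deformedProduct.mul (T L 1) (single 0 a) = (leftMulT D).val (single 0 a) := by
    rw [← zpow_one (leftMulT D), ← deformedMul_T]
    rfl
  rw [hT, coeff_leftMulT_single_zero hδ]

end Existence

end InvLaurent

/-! ### Products with prescribed `T · a` -/

open InvLaurent

namespace DeformedProduct

variable {L : Type*} [Field L] (μ : DeformedProduct L)

/-- The multiplication of `μ` as a biadditive map. -/
def mulHom : InvLaurent L →+ AddMonoid.End (InvLaurent L) :=
  AddMonoidHom.mk' (fun f => AddMonoidHom.mk' (μ.mul f) (μ.left_distrib f)) fun f g => by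
    ext1 h
    exact μ.right_distrib f g h

lemma mulHom_apply (f g : InvLaurent L) : μ.mulHom f g = μ.mul f g := rfl

lemma mulHom_injective :
    Function.Injective (mulHom : DeformedProduct L → InvLaurent L →+ AddMonoid.End _) := by
  intro μ ν h
  have hmul : μ.mul = ν.mul := funext₂ fun f g => DFunLike.congr_fun (DFunLike.congr_fun h f) g
  cases μ
  cases ν
  cases hmul
  rfl

lemma mul_mem_degLE {f g : InvLaurent L} {n p : ℤ} (hf : f ∈ degLE n) (hg : g ∈ degLE p) :
    μ.mul f g ∈ degLE (n + p) := by
  rw [← deg_le_iff_mem_degLE] at hf hg ⊢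
  rw [μ.deg_mul, WithBot.coe_add]
  exact add_le_add hf hg

lemma shiftsDegree_mulHom {f : InvLaurent L} {n : ℤ} (hf : f ∈ degLE n) :
    ShiftsDegree (μ.mulHom f) n :=
  fun _ p hg => add_comm n p ▸ μ.mul_mem_degLE hf hg

lemma shiftsDegree_flip_mulHom {g : InvLaurent L} {p : ℤ} (hg : g ∈ degLE p) :
    ShiftsDegree (μ.mulHom.flip g) p :=
  fun _ _ hf => μ.mul_mem_degLE hf hg

lemma single_eq_mul_T (i : ℤ) (a : L) : single i a = μ.mul (single 0 a) (T L i) := by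
  rw [μ.lsmul_eq, ← lsmulHom_apply, T, lsmulHom_single, mul_one]

lemma mul_T (f : InvLaurent L) (j : ℤ) : μ.mul f (T L j) = shift j f := by
  have hT : T L j ∈ degLE j := single_mem_degLE j 1
  refine DFunLike.congr_fun ((μ.shiftsDegree_flip_mulHom hT).ext (shiftsDegree_shift j)
    fun i a => ?_) f
  calc μ.mul (single i a) (T L j)
      = μ.mul (single 0 a) (T L (i + j)) := by rw [μ.single_eq_mul_T i, μ.mul_assoc, μ.T_mul_T]
    _ = shift j (single i a) := by rw [← μ.single_eq_mul_T, shift_single, add_comm]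

end DeformedProduct

namespace HasDelta

variable {L : Type*} [Field L] {μ : DeformedProduct L} {δ : ℤ → L → L} {D : ℕ → AddMonoid.End L}

lemma mulHom_T_one (hμ : HasDelta μ δ) (hδ : RepresentsDelta D δ) :
    μ.mulHom (T L 1) = leftMulT D := by
  refine (μ.shiftsDegree_mulHom (single_mem_degLE 1 1)).ext (shiftsDegree_leftMulT D) fun j a => ?_
  have hconst : μ.mul (T L 1) (single 0 a) = (leftMulT D).val (single 0 a) := by
    ext m
    rw [hμ, coeff_leftMulT_single_zero hδ]
  calc μ.mul (T L 1) (single j a)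
      = shift j ((leftMulT D).val (single 0 a)) := by
        rw [μ.single_eq_mul_T j, ← μ.mul_assoc, μ.mul_T, hconst]
    _ = (leftMulT D).val (single j a) := by
        rw [single_eq_shift j]
        exact DFunLike.congr_fun (commute_shift_leftMulT D j) (single 0 a)

lemma mulHom_T (hμ : HasDelta μ δ) (hδ : RepresentsDelta D δ) (i : ℤ) :
    μ.mulHom (T L i) = (leftMulT D ^ i).val := by
  refine eq_coe_zpow_of_add_one (leftMulT D) (fun i => μ.mulHom (T L i)) ?_ (fun i => ?_) i
  · ext1 f
    rw [μ.mulHom_apply, T, μ.lsmul_eq, ← lsmulHom_apply, map_one]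
  · ext1 f
    rw [← hμ.mulHom_T_one hδ, add_comm, ← μ.T_mul_T]
    exact μ.mul_assoc _ _ f

lemma mulHom_eq_deformedMul (hμ : HasDelta μ δ) (hδ : RepresentsDelta D δ) :
    μ.mulHom = deformedMul D := by
  ext1 f
  ext1 g
  obtain ⟨p, hp⟩ := exists_mem_degLE g
  refine DFunLike.congr_fun ((μ.shiftsDegree_flip_mulHom hp).ext
    (shiftsDegree_deformedMulRight D hp) fun i a => ?_) f
  calc μ.mul (single i a) g
      = lsmulHom a (μ.mulHom (T L i) g) := by
        rw [μ.single_eq_mul_T i, μ.mul_assoc, μ.lsmul_eq, lsmulHom_apply, μ.mulHom_apply]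
    _ = deformedMul D (single i a) g := by
        rw [hμ.mulHom_T hδ, deformedMul_single]
        rfl

lemma associativeOnConstants (hμ : HasDelta μ δ)
    (hδ : RepresentsDelta D δ) : AssociativeOnConstants D := fun a b => by
  rw [← lsmulHom_single, ← hμ.mulHom_T_one hδ, ← hμ.mulHom_eq_deformedMul hδ]
  refine (μ.mul_assoc _ _ _).trans ?_
  rw [μ.lsmul_eq, lsmulHom_apply, μ.mulHom_apply]

lemma delta_add (hμ : HasDelta μ δ) {i : ℤ} (hi : i ≤ 0) (a b : L) :
    δ i (a + b) = δ i a + δ i b := by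
  have hcoeff (c : L) : (μ.mul (T L 1) (single 0 c)).coeff i = δ i c := by
    rw [hμ, if_neg (by lia), if_pos hi]
  have hsingle : single 0 (a + b) = single 0 a + single 0 b := by
    ext m
    rw [coeff_add, coeff_single, coeff_single, coeff_single, ← ite_add_zero]
  rw [← hcoeff, ← hcoeff, ← hcoeff, hsingle, μ.left_distrib, coeff_add]

lemma coeff_mul_single_single (hμ : HasDelta μ δ) (hδ : RepresentsDelta D δ)
    (i j : ℤ) (a b : L) (m : ℤ) :
    (μ.mul (single i a) (single j b)).coeff m = (if m = i + j then a * b else 0) +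
      ∑ᶠ js : List ℤ, if js ≠ [] ∧ (∀ x ∈ js, x ≤ 0) ∧ js.sum - (js.length : ℤ) + i + j = m
        then zbinom i js.length • (a * dcomp δ js b) else 0 := by
  have hmul : μ.mul (single i a) (single j b) =
      lsmulHom a ((leftMulT D ^ i).val (single j b)) := by
    rw [← μ.mulHom_apply, hμ.mulHom_eq_deformedMul hδ, deformedMul_single]
    rfl
  rw [hmul, coeff_lsmulHom, coeff_leftMulT_zpow_single hδ, mul_add, mul_ite, mul_zero,
    Finset.mul_sum, finsum_ite_eq_sum ((tuplesOfDegree (m - (i + j))).erase [])]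
  · simp only [mul_smul_comm, zbinom_eq_ringChoose]
  · intro js
    rw [Finset.mem_erase, mem_tuplesOfDegree, eq_sub_iff_add_eq, add_assoc]

end HasDelta

/-- The maps `δ_{-n}` as additive endomorphisms, indexed by `n`. -/
def deltaHom {L : Type*} [Field L] {δ : ℤ → L → L}
    (hadd : ∀ i ≤ 0, ∀ a b : L, δ i (a + b) = δ i a + δ i b) (n : ℕ) : AddMonoid.End L :=
  AddMonoidHom.mk' (δ (-n)) (hadd (-n) (neg_nonpos.mpr n.cast_nonneg))

lemma representsDelta_deltaHom {L : Type*} [Field L] {δ : ℤ → L → L}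
    (hadd : ∀ i ≤ 0, ∀ a b : L, δ i (a + b) = δ i a + δ i b) :
    RepresentsDelta (deltaHom hadd) δ := fun _ _ => rfl

theorem deformedProduct_exists_iff_leibnizStar_general (L : Type*) [Field L] (δ : ℤ → L → L) :
    ((∃! μ : DeformedProduct L, HasDelta μ δ) ↔
      (∀ i ≤ 0, ∀ a b : L, δ i (a + b) = δ i a + δ i b) ∧ LeibnizStar δ) ∧
    (∀ μ : DeformedProduct L, HasDelta μ δ →
      ∀ (i j : ℤ) (a b : L) (m : ℤ),
        (μ.mul (single i a) (single j b)).coeff m =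
          (if m = i + j then a * b else 0) +
          ∑ᶠ js : List ℤ,
            if js ≠ [] ∧ (∀ x ∈ js, x ≤ 0) ∧ js.sum - (js.length : ℤ) + i + j = m
            then zbinom i js.length • (a * dcomp δ js b) else 0) := by
  have hadd {μ : DeformedProduct L} (hμ : HasDelta μ δ) :
      ∀ i ≤ 0, ∀ a b : L, δ i (a + b) = δ i a + δ i b :=
    fun _ hi => hμ.delta_add hi
  refine ⟨⟨?_, ?_⟩, fun μ hμ =>
    hμ.coeff_mul_single_single (representsDelta_deltaHom (hadd hμ))⟩
  · rintro ⟨μ, hμ, -⟩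
    have hδ := representsDelta_deltaHom (hadd hμ)
    exact ⟨hadd hμ, (associativeOnConstants_iff_leibnizStar hδ).mp
      (hμ.associativeOnConstants hδ)⟩
  · rintro ⟨hadd, hL⟩
    have hδ := representsDelta_deltaHom hadd
    have hD := (associativeOnConstants_iff_leibnizStar hδ).mpr hL
    refine ⟨hD.deformedProduct, hD.hasDelta_deformedProduct hδ, fun μ hμ => ?_⟩
    exact DeformedProduct.mulHom_injective (hμ.mulHom_eq_deformedMul hδ)

end

open InvLaurent in
/-- for additive maps `δ_i : L → L` (`i ≤ 0`) on a field `L` of characteristic `0`,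
there exists a (necessarily unique) deformed Laurent series product on `L((T⁻¹))` with
`T·a = aT + Σ_{i≤0} δ_i(a)T^i` if and only if the `δ_i` satisfy the Leibniz-type identity (★);
moreover any such product is given on monomials by
`aT^i · bT^j = ab T^{i+j} + Σ_{k≥1} Σ binom(i,k) a δ_{j₁}⋯δ_{j_k}(b) T^{j₁+⋯+j_k−k+i+j}`. -/
theorem deformedProduct_exists_iff_leibnizStar (L : Type*) [Field L] [CharZero L]
    (δ : ℤ → L → L)
    (hadd : ∀ i : ℤ, i ≤ 0 → ∀ a b : L, δ i (a + b) = δ i a + δ i b) :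
    ((∃! μ : DeformedProduct L, HasDelta μ δ) ↔ LeibnizStar δ) ∧
    (∀ μ : DeformedProduct L, HasDelta μ δ →
      ∀ (i j : ℤ) (a b : L) (m : ℤ),
        (μ.mul (single i a) (single j b)).coeff m =
          (if m = i + j then a * b else 0) +
          ∑ᶠ js : List ℤ,
            if js ≠ [] ∧ (∀ x ∈ js, x ≤ 0) ∧ js.sum - (js.length : ℤ) + i + j = m
            then zbinom i js.length • (a * dcomp δ js b) else 0) := by
  exact ⟨(deformedProduct_exists_iff_leibnizStar_general L δ).1.trans (and_iff_right hadd),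
    (deformedProduct_exists_iff_leibnizStar_general L δ).2⟩
end

section
/- Let K be a field of characteristic 0, let l ∈ ℕ, and let p ∈ K[z] be a polynomial with deg p ≤ l. Then for every z ∈ K: Σ_{t=0}^{l} (−1)^{l−t} · binom(z, t) · binom(z−1−t, l−t) · p(t) = p(z), where p(t) denotes evaluation of p at the image of the natural number t in K. -/
noncomputable section

open scoped Classical

/-- `Tsum x i l = Σ_{(j₁,…,j_i) ∈ T(i,l)} binom(x,j₁)⋯binom(x,j_i)`, the sum over all
`i`-tuples of positive integers with sum `l` (a finitely supported sum). -/
def Tsum (x : ℝ) (i l : ℕ) : ℝ :=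
  ∑ᶠ c : Fin i → ℕ,
    if (∀ t, 1 ≤ c t) ∧ (∑ t, c t) = l then ∏ t, gbinom x (c t) else 0

end

/-! The coefficient `(-1) ^ (l - t) * binom(z, t) * binom(z - 1 - t, l - t)` is the Lagrange basis
polynomial of the node `t` among the nodes `0, 1, …, l`, evaluated at `z`: removing the factor
`z - t` from `z (z - 1) ⋯ (z - l)` leaves the numerators of the two binomial coefficients, and at
`z = t` these numerators equal `t!` and `(-1) ^ (l - t) * (l - t)!`. The sum is therefore the
Lagrange interpolation formula for `p`. -/

open Finset Polynomial
open scoped Nat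

theorem prod_range_erase {M : Type*} [CommMonoid M] (f : ℕ → M) (t m : ℕ) :
    ∏ j ∈ (range (t + m + 1)).erase t, f j =
      (∏ j ∈ range t, f j) * ∏ i ∈ range m, f (t + 1 + i) := by
  have erase_eq_union : (range (t + m + 1)).erase t = range t ∪ Ico (t + 1) (t + m + 1) := by
    ext j
    simp only [mem_erase, mem_union, mem_range, mem_Ico]
    lia
  have disjoint_pieces : Disjoint (range t) (Ico (t + 1) (t + m + 1)) := by
    simp only [disjoint_left, mem_range, mem_Ico]
    lia
  rw [erase_eq_union, prod_union disjoint_pieces, prod_Ico_eq_prod_range,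
    show t + m + 1 - (t + 1) = m by lia]

section CommRing

variable {R : Type*} [CommRing R]

theorem prod_range_natCast_sub_self (n : ℕ) : ∏ i ∈ range n, ((n : R) - i) = n ! := by
  rw [← descPochhammer_eval_eq_prod_range, descPochhammer_eval_eq_descFactorial,
    Nat.descFactorial_self]

theorem prod_range_neg_one_sub (n : ℕ) : ∏ i ∈ range n, (-1 - i : R) = (-1) ^ n * n ! := by
  have neg_one_sub (i : ℕ) : (-1 - i : R) = -((i + 1 : ℕ) : R) := by
    push_cast
    ring
  simp only [neg_one_sub, prod_neg, card_range, ← Nat.cast_prod, prod_range_add_one_eq_factorial]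

theorem prod_range_erase_sub (z : R) (t m : ℕ) :
    ∏ j ∈ (range (t + m + 1)).erase t, (z - j) =
      (∏ j ∈ range t, (z - j)) * ∏ i ∈ range m, (z - 1 - t - i) := by
  rw [prod_range_erase]
  congr 1
  refine prod_congr rfl fun i _ => ?_
  push_cast
  ring

theorem prod_range_erase_natCast_sub (t m : ℕ) :
    ∏ j ∈ (range (t + m + 1)).erase t, ((t : R) - j) = t ! * ((-1) ^ m * m !) := by
  rw [prod_range_erase_sub, prod_range_natCast_sub_self, sub_right_comm, sub_self, zero_sub,
    prod_range_neg_one_sub]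

end CommRing

theorem injOn_natCast_range_of_factorial_ne_zero {R : Type*} [Ring R] {n : ℕ}
    (hn : (n ! : R) ≠ 0) : Set.InjOn (Nat.cast : ℕ → R) (range (n + 1)) := by
  have cast_ne {i j : ℕ} (hij : i < j) (hjn : j ≤ n) : (i : R) ≠ j := by
    intro heq
    have cast_sub_eq_zero : ((j - i : ℕ) : R) = 0 := by
      rw [Nat.cast_sub hij.le, heq, sub_self]
    have sub_dvd_factorial : j - i ∣ n ! := Nat.dvd_factorial (by lia) (by lia)
    exact hn (zero_dvd_iff.mp (cast_sub_eq_zero ▸ Nat.cast_dvd_cast sub_dvd_factorial))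
  intro i hi j hj heq
  rw [mem_coe, mem_range_succ_iff] at hi hj
  rcases lt_trichotomy i j with hij | hij | hji
  · exact absurd heq (cast_ne hij hj)
  · exact hij
  · exact absurd heq.symm (cast_ne hji hi)

section Field

variable {K : Type*} [Field K]

theorem eval_lagrange_basis {ι : Type*} [DecidableEq ι] (s : Finset ι) (v : ι → K) (i : ι)
    (z : K) :
    (Lagrange.basis s v i).eval z =
      (∏ j ∈ s.erase i, (z - v j)) / ∏ j ∈ s.erase i, (v i - v j) := by
  simp only [Lagrange.basis, Lagrange.basisDivisor, eval_prod, eval_mul, eval_C, eval_sub, eval_X,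
    prod_mul_distrib, prod_inv_distrib, div_eq_inv_mul]

theorem eval_lagrange_basis_range (z : K) {t l : ℕ} (htl : t ≤ l) :
    (Lagrange.basis (range (l + 1)) (Nat.cast : ℕ → K) t).eval z =
      (-1) ^ (l - t) * gbinom z t * gbinom (z - 1 - t) (l - t) := by
  obtain ⟨m, rfl⟩ := Nat.exists_eq_add_of_le htl
  have inv_sign : ((-1 : K) ^ m)⁻¹ = (-1) ^ m := by rw [← inv_pow, inv_neg_one]
  rw [eval_lagrange_basis, prod_range_erase_sub, prod_range_erase_natCast_sub,
    Nat.add_sub_cancel_left, gbinom, gbinom]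
  simp only [div_eq_mul_inv, mul_inv, inv_sign]
  ring

theorem binom_interpolation_general {l : ℕ} (hl : (l ! : K) ≠ 0) {p : K[X]}
    (hp : p.degree ≤ l) (z : K) :
    ∑ t ∈ range (l + 1),
        (-1 : K) ^ (l - t) * gbinom z t * gbinom (z - 1 - t) (l - t) * p.eval (t : K) =
      p.eval z := by
  have degree_lt : p.degree < #(range (l + 1)) := by
    rw [card_range]
    exact hp.trans_lt (mod_cast l.lt_succ_self)
  have eq_interpolate : p = Lagrange.interpolate (range (l + 1)) Nat.cast fun t => p.eval (t : K) :=
    Lagrange.eq_interpolate (injOn_natCast_range_of_factorial_ne_zero hl) degree_lt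
  conv_rhs => rw [eq_interpolate, Lagrange.interpolate_apply, eval_finsetSum]
  refine sum_congr rfl fun t ht => ?_
  rw [eval_mul, eval_C, eval_lagrange_basis_range z (mem_range_succ_iff.mp ht), mul_comm]

end Field

/-- in a field `K` of characteristic `0`, for any `l ∈ ℕ` and any polynomial `p`
with `deg p ≤ l`, and any `z ∈ K`:
`Σ_{t=0}^{l} (−1)^{l−t} binom(z,t) binom(z−1−t,l−t) p(t) = p(z)`. -/
theorem binom_interpolation (K : Type*) [Field K] [CharZero K] (l : ℕ)
    (p : Polynomial K) (hp : p.degree ≤ (l : ℕ)) (z : K) :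
    ∑ t ∈ Finset.range (l + 1),
        (-1 : K) ^ (l - t) * gbinom z t * gbinom (z - 1 - t) (l - t) * p.eval (t : K) =
      p.eval z :=
  binom_interpolation_general (Nat.cast_ne_zero.mpr l.factorial_ne_zero) hp z
end

section
/- Let x be a real number and let i, l be integers with 1 ≤ i ≤ l. Then Σ_{(j_1,…,j_i)∈T(i,l)} binom(x, j_1)⋯binom(x, j_i) = Σ_{j=0}^{i−1} (−1)^j · C(i,j) · binom((i−j)·x, l), where C(i,j) is the ordinary binomial coefficient. (In the paper x = ν^{-1} for an integer ν ≥ 1.) -/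
/-!
Both sides are the coefficient of `X ^ l` in `((1 + X) ^ x - 1) ^ i`. Multiplying out the `i`
factors, none of which has a constant term, gives the sum over tuples of positive integers; the
binomial theorem together with `((1 + X) ^ x) ^ n = (1 + X) ^ (n x)` gives the alternating sum.
-/

section

open Finset PowerSeries

lemma coeff_prod_eq_sum_piAntidiag {R ι : Type*} [CommSemiring R] [DecidableEq ι]
    (f : ι → R⟦X⟧) (d : ℕ) (s : Finset ι) :
    coeff d (∏ t ∈ s, f t) = ∑ c ∈ piAntidiag s d, ∏ t ∈ s, coeff (c t) (f t) := by
  rw [coeff_prod]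
  refine sum_bij (fun c _ ↦ ⇑c) (fun c hc ↦ ?_) (fun _ _ _ _ h ↦ DFunLike.coe_injective h)
    (fun c hc ↦ ?_) fun _ _ ↦ rfl
  · simpa [subset_iff] using hc
  · rw [mem_piAntidiag] at hc
    exact ⟨Finsupp.onFinset s c hc.2, by simp [hc.1], rfl⟩

lemma coeff_prod_of_constantCoeff_eq_zero {R ι : Type*} [CommSemiring R] [DecidableEq ι]
    {f : ι → R⟦X⟧} {s : Finset ι} (hf : ∀ t ∈ s, constantCoeff (f t) = 0) (d : ℕ) :
    coeff d (∏ t ∈ s, f t) =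
      ∑ c ∈ piAntidiag s d with ∀ t ∈ s, c t ≠ 0, ∏ t ∈ s, coeff (c t) (f t) := by
  rw [coeff_prod_eq_sum_piAntidiag]
  refine (sum_filter_of_ne fun c _ hprod t ht hct ↦ hprod ?_).symm
  exact prod_eq_zero ht (by rw [hct, coeff_zero_eq_constantCoeff_apply, hf t ht])

variable {R : Type*} [CommRing R] [BinomialRing R]

lemma binomialSeries_natCast_mul (A : Type*) [Ring A] [Algebra R A] (n : ℕ) (r : R) :
    binomialSeries A (n * r) = binomialSeries A r ^ n := by
  induction n with
  | zero => simp
  | succ n ih => rw [Nat.cast_succ, add_one_mul, binomialSeries_add, ih, pow_succ]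

lemma coeff_binomialSeries_sub_one_of_ne_zero (r : R) {n : ℕ} (hn : n ≠ 0) :
    coeff n (binomialSeries R r - 1) = Ring.choose r n := by
  simp [coeff_one, hn]

lemma coeff_binomialSeries_sub_one_pow_eq_sum_piAntidiag (r : R) (i l : ℕ) :
    coeff l ((binomialSeries R r - 1) ^ i) =
      ∑ c ∈ piAntidiag (univ : Finset (Fin i)) l with ∀ t, c t ≠ 0,
        ∏ t, Ring.choose r (c t) := by
  have hconst : constantCoeff (binomialSeries R r - 1) = 0 := by simp
  rw [← Fin.prod_const, coeff_prod_of_constantCoeff_eq_zero fun _ _ ↦ hconst]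
  simp only [mem_univ, true_imp_iff]
  refine sum_congr rfl fun c hc ↦ prod_congr rfl fun t _ ↦ ?_
  exact coeff_binomialSeries_sub_one_of_ne_zero r ((mem_filter.1 hc).2 t)

lemma coeff_binomialSeries_sub_one_pow_eq_alternating_sum (r : R) (i : ℕ) {l : ℕ} (hl : l ≠ 0) :
    coeff l ((binomialSeries R r - 1) ^ i) =
      ∑ j ∈ range i, (-1) ^ j * (i.choose j : R) * Ring.choose (((i - j : ℕ) : R) * r) l := by
  have hterm (j : ℕ) :
      coeff l ((-1) ^ j * binomialSeries R r ^ (i - j) * (i.choose j : R⟦X⟧)) =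
        (-1) ^ j * (i.choose j : R) * Ring.choose (((i - j : ℕ) : R) * r) l := by
    have hC : (-1) ^ j * binomialSeries R r ^ (i - j) * (i.choose j : R⟦X⟧) =
        C ((-1) ^ j * (i.choose j : R)) * binomialSeries R (((i - j : ℕ) : R) * r) := by
      rw [binomialSeries_natCast_mul, mul_right_comm]
      simp
    rw [hC, coeff_C_mul, binomialSeries_coeff, smul_eq_mul, mul_one]
  have hlast : Ring.choose (((i - i : ℕ) : R) * r) l = 0 := by
    rw [Nat.sub_self, Nat.cast_zero, zero_mul, Ring.choose_zero_pos R (Nat.pos_of_ne_zero hl)]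
  rw [sub_eq_neg_add, add_pow, map_sum, sum_congr rfl fun j _ ↦ hterm j, sum_range_succ, hlast,
    mul_zero, add_zero]

theorem Tsum_eq_alternating_general (r : R) (i : ℕ) {l : ℕ} (hl : l ≠ 0) :
    ∑ c ∈ piAntidiag (univ : Finset (Fin i)) l with ∀ t, c t ≠ 0, ∏ t, Ring.choose r (c t) =
      ∑ j ∈ range i, (-1) ^ j * (i.choose j : R) * Ring.choose (((i - j : ℕ) : R) * r) l := by
  rw [← coeff_binomialSeries_sub_one_pow_eq_sum_piAntidiag,
    coeff_binomialSeries_sub_one_pow_eq_alternating_sum r i hl]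

end

lemma gbinom_eq_choose {K : Type*} [Field K] [CharZero K] (a : K) (k : ℕ) :
    gbinom a k = Ring.choose a k := by
  rw [gbinom, Ring.choose_eq_smul, ← Polynomial.aeval_eq_smeval, Polynomial.aeval_def,
    Polynomial.eval₂_eq_eval_map, descPochhammer_map, descPochhammer_eval_eq_prod_range,
    div_eq_inv_mul, smul_eq_mul]

lemma Tsum_eq_sum_piAntidiag (x : ℝ) (i l : ℕ) :
    Tsum x i l = ∑ c ∈ Finset.piAntidiag (Finset.univ : Finset (Fin i)) l with ∀ t, c t ≠ 0,
      ∏ t, gbinom x (c t) := by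
  rw [Tsum, finsum_eq_sum_of_support_subset (s := Finset.piAntidiag Finset.univ l),
    Finset.sum_filter]
  · refine Finset.sum_congr rfl fun c hc ↦ if_congr ?_ rfl rfl
    have hsum : ∑ t, c t = l := (Finset.mem_piAntidiag.1 hc).1
    simp only [hsum, and_true, Nat.one_le_iff_ne_zero]
  · intro c hc
    have hsum : ∑ t, c t = l := by
      by_contra h
      exact hc (if_neg fun hcond ↦ h hcond.2)
    simp [hsum]

/-- for a real `x` and integers `1 ≤ i ≤ l`:
`Σ_{(j₁,…,j_i)∈T(i,l)} binom(x,j₁)⋯binom(x,j_i) = Σ_{j=0}^{i−1} (−1)^j C(i,j) binom((i−j)x, l)`. -/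
theorem Tsum_eq_alternating (x : ℝ) (i l : ℕ) (hi : 1 ≤ i) (hil : i ≤ l) :
    Tsum x i l =
      ∑ j ∈ Finset.range i, (-1 : ℝ) ^ j * (i.choose j : ℝ) * gbinom (((i - j : ℕ) : ℝ) * x) l := by
  simp only [Tsum_eq_sum_piAntidiag, gbinom_eq_choose]
  exact Tsum_eq_alternating_general x i (by omega)
end

section
/- Let K be a field of characteristic 0, L = K(α) the rational function field, d : L → L the unique K-derivation with d(α) = 1, and r, s ∈ ℤ with s ≠ 0 and ν = r + s > 0. Suppose · is a deformed Laurent series product on L((T^{-1})) satisfying T·f = fT + Σ_{k≥1} (d_k/k!)·d^k(f) · T^{1−kν} for all f ∈ L, where d_k = (Π_{i=0}^{k−1}(1 − iν))/s^k. Then: (a) for every n ∈ ℤ, T^n·α − α·T^n = (n/s)·T^{n−ν}; (b) T^s·(α T^r) − (α T^r)·T^s = 1; (c) consequently there exists an injective K-algebra homomorphism η from the Weyl algebra A_1(K) to the division ring (L((T^{-1})), ·) with η(q) = T^s and η(p) = α T^r. -/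
noncomputable section

/-- The defining relation of the Weyl algebra: `q p = p q + 1`
(with `false` playing the role of `p` and `true` that of `q`). -/
inductive WeylRel (K : Type*) [Field K] : FreeAlgebra K Bool → FreeAlgebra K Bool → Prop
  | rel : WeylRel K (FreeAlgebra.ι K true * FreeAlgebra.ι K false)
      (FreeAlgebra.ι K false * FreeAlgebra.ι K true + 1)

/-- The Weyl algebra `A₁(K)`: the quotient of the free associative unital `K`-algebra on two
generators `p`, `q` by the two-sided ideal generated by `q p - p q - 1`. -/
def Weyl (K : Type*) [Field K] := RingQuot (WeylRel K)

instance (K : Type*) [Field K] : Ring (Weyl K) :=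
  inferInstanceAs (Ring (RingQuot (WeylRel K)))

instance (K : Type*) [Field K] : Algebra K (Weyl K) :=
  inferInstanceAs (Algebra K (RingQuot (WeylRel K)))

/-- The generator `p` of the Weyl algebra. -/
def Wp (K : Type*) [Field K] : Weyl K :=
  RingQuot.mkAlgHom K (WeylRel K) (FreeAlgebra.ι K false)

/-- The generator `q` of the Weyl algebra. -/
def Wq (K : Type*) [Field K] : Weyl K :=
  RingQuot.mkAlgHom K (WeylRel K) (FreeAlgebra.ι K true)

/-- A degree map on a ring `R`: a function `u : R → ℝ ∪ {-∞}` with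
`u(fg) = u(f) + u(g)`, `u(f+g) ≤ max (u f) (u g)`, and `u f = -∞ ↔ f = 0`. -/
structure IsDegreeMap {R : Type*} [Ring R] (u : R → WithBot ℝ) : Prop where
  map_mul : ∀ f g, u (f * g) = u f + u g
  add_le : ∀ f g, u (f + g) ≤ max (u f) (u g)
  bot_iff : ∀ f, u f = ⊥ ↔ f = 0

end

noncomputable section

open InvLaurent

/-- The coefficient `d_k / k! = (∏_{i=0}^{k-1} (1 - iν)) / (s^k k!)` (with `ν = r + s`),
as an element of `K(α) = RatFunc K`. -/
def dCoeff (K : Type*) [Field K] (r s : ℤ) (k : ℕ) : RatFunc K :=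
  (∏ i ∈ Finset.range k, (1 - (i : RatFunc K) * (((r + s : ℤ) : ℤ) : RatFunc K))) /
    (((s : ℤ) : RatFunc K) ^ k * (k.factorial : RatFunc K))

/-- The family `δ_i : L → L` (`L = K(α)`): `δ_{1-kν} = (d_k/k!)·d^k` for `k ≥ 1`
(`ν = r + s`), and `δ_i = 0` for `i ≢ 1 (mod ν)`. -/
def deltaFamily (K : Type*) [Field K] (d : RatFunc K → RatFunc K) (r s : ℤ) :
    ℤ → RatFunc K → RatFunc K := fun i a =>
  if (r + s) ∣ (1 - i) ∧ 1 ≤ (1 - i) / (r + s) then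
    dCoeff K r s ((1 - i) / (r + s)).toNat * (d^[((1 - i) / (r + s)).toNat] a)
  else 0

/-!
For `a ∈ L` with `d (d a) = 0` the series for `T·a` stops after two terms. For `a ∈ K` it says that
`T` commutes with `a`; for `a = α` it says that conjugation by `T` maps `α` to `α + y`, where
`y = (1/s) T^{-ν}` commutes with `T`, so conjugation by `T^n` maps `α` to `α + n y`.
Multiplying the case `n = s` by `T^r` gives (b).

By (b), `q ↦ T^s`, `p ↦ α T^r` defines a homomorphism on `A₁(K)`. It is injective because in
characteristic `0` every homomorphism from `A₁(K)` to a nonzero ring is: each element of `A₁(K)` has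
the form `Σ f_i(q) p^i`, and the commutators with `q` and `-p` differentiate with respect to `p` and
`q`, so a nonzero element of the kernel can be differentiated down to a nonzero constant.
-/

section Commutator

open Polynomial

theorem mul_pow_eq_of_mul_eq_mul_add_one {A : Type*} [Semiring A] {x z : A}
    (h : z * x = x * z + 1) (n : ℕ) : z * x ^ n = x ^ n * z + n * x ^ (n - 1) := by
  induction n with
  | zero => simp
  | succ n ih =>
    have hpow : (n : A) * x ^ (n - 1) * x = n * x ^ n := by
      cases n <;> simp [pow_succ, mul_assoc]
    calc z * x ^ (n + 1) = z * x ^ n * x := by rw [pow_succ, mul_assoc]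
      _ = x ^ n * (z * x) + n * x ^ (n - 1) * x := by rw [ih, add_mul, mul_assoc]
      _ = x ^ (n + 1) * z + (n + 1 : ℕ) * x ^ (n + 1 - 1) := by
        rw [hpow, h, Nat.add_sub_cancel, pow_succ, Nat.cast_succ]
        noncomm_ring

variable {R A : Type*}

theorem mul_eval₂_eq_add_eval₂_derivative [Semiring R] [Semiring A] {φ : R →+* A} {x z : A}
    (hφ : ∀ a, Commute z (φ a)) (h : z * x = x * z + 1) (f : R[X]) :
    z * f.eval₂ φ x = f.eval₂ φ x * z + f.derivative.eval₂ φ x := by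
  induction f using Polynomial.induction_on' with
  | add f g hf hg =>
    simp only [eval₂_add, derivative_add, mul_add, add_mul, hf, hg, add_add_add_comm]
  | monomial n a =>
    rw [derivative_monomial, eval₂_monomial, eval₂_monomial, ← mul_assoc, (hφ a).eq, mul_assoc,
      mul_pow_eq_of_mul_eq_mul_add_one h, mul_add, map_mul, map_natCast]
    simp only [mul_assoc]

theorem eval₂_injective_of_mul_eq_mul_add_one [Ring R] [IsAddTorsionFree R] [Ring A]
    {φ : R →+* A} {x z : A} (hinj : Function.Injective φ) (hφ : ∀ a, Commute z (φ a))
    (h : z * x = x * z + 1) : Function.Injective (eval₂ φ x) := by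
  refine (injective_iff_map_eq_zero (eval₂AddMonoidHom φ x)).mpr fun f hf ↦ ?_
  change f.eval₂ φ x = 0 at hf
  induction hn : f.natDegree using Nat.strong_induction_on generalizing f with
  | _ n ih =>
    have hconst : f.natDegree = 0 := by
      by_contra hdeg
      have hderiv : f.derivative.eval₂ φ x = 0 := by
        simpa [hf] using (mul_eval₂_eq_add_eval₂_derivative hφ h f).symm
      exact hdeg (derivative_eq_zero.mp (ih _ (hn ▸ natDegree_derivative_lt hdeg) _ hderiv rfl))
    obtain ⟨a, rfl⟩ := natDegree_eq_zero.mp hconst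
    rw [eval₂_C, map_eq_zero_iff φ hinj] at hf
    rw [hf, C_0]

theorem semiconjBy_units_zpow_add_zsmul [Ring A] {u : Aˣ} {x y : A}
    (hx : SemiconjBy (u : A) x (x + y)) (hy : Commute (u : A) y) (n : ℤ) :
    SemiconjBy ((u ^ n : Aˣ) : A) x (x + n • y) := by
  have hinv : SemiconjBy ((u⁻¹ : Aˣ) : A) x (x - y) :=
    SemiconjBy.units_inv_symm_left (by simpa using hx.sub_right hy)
  induction n using Int.induction_on with
  | zero => simp
  | succ n ih =>
    rw [zpow_add_one, Units.val_mul, add_zsmul, one_zsmul, ← add_assoc]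
    exact (ih.add_right (hy.units_zpow_left n)).mul_left hx
  | pred n ih =>
    rw [zpow_sub_one, Units.val_mul, sub_zsmul, one_zsmul, ← sub_eq_add_neg,
      ← add_sub_assoc]
    exact (ih.sub_right (hy.units_zpow_left (-n))).mul_left hinv

end Commutator

namespace Weyl

open Polynomial

variable (K : Type*) [Field K]

theorem Wq_mul_Wp : Wq K * Wp K = Wp K * Wq K + 1 := by
  have h := RingQuot.mkAlgHom_rel K (WeylRel.rel (K := K))
  simp only [map_add, map_mul, map_one] at h
  exact h

theorem adjoin_Wp_Wq : Algebra.adjoin K {Wp K, Wq K} = ⊤ := by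
  let π : FreeAlgebra K Bool →ₐ[K] Weyl K := RingQuot.mkAlgHom K (WeylRel K)
  have hπ : Function.Surjective π := RingQuot.mkAlgHom_surjective K (WeylRel K)
  have hgen : π '' Set.range (FreeAlgebra.ι K) = {Wp K, Wq K} := by
    rw [← Set.range_comp, Bool.range_eq]
    rfl
  rw [← hgen, ← AlgHom.map_adjoin, FreeAlgebra.adjoin_range_ι, Algebra.map_top]
  exact AlgHom.range_eq_top π |>.mpr hπ

theorem commute_Wq_aeval (f : K[X]) : Commute (Wq K) (aeval (Wq K) f) := by
  simpa only [aeval_X] using (Commute.all X f).map (aeval (R := K) (Wq K))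

/-- The map `Σ f_i Y^i ↦ Σ f_i(q) p^i` from `K[X][Y]` to the Weyl algebra. It expresses elements in
normal form, with the powers of `q` to the left of those of `p`. -/
def normalForm : K[X][X] →+ Weyl K :=
  eval₂AddMonoidHom (aeval (R := K) (Wq K) : K[X] →+* Weyl K) (Wp K)

theorem Wq_mul_normalForm (F : K[X][X]) :
    Wq K * normalForm K F = normalForm K F * Wq K + normalForm K F.derivative :=
  mul_eval₂_eq_add_eval₂_derivative (commute_Wq_aeval K) (Wq_mul_Wp K) F

theorem normalForm_X_smul (F : K[X][X]) :
    normalForm K ((X : K[X]) • F) = Wq K * normalForm K F := by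
  simp [normalForm, eval₂_smul]

theorem normalForm_mul_X (F : K[X][X]) : normalForm K (F * X) = normalForm K F * Wp K :=
  eval₂_mul_X _ _

theorem normalForm_mul_C_C (F : K[X][X]) (c : K) :
    normalForm K (F * C (C c)) = normalForm K F * algebraMap K (Weyl K) c := by
  have hc : Commute (aeval (R := K) (Wq K) (C c)) (Wp K) := by
    rw [aeval_C]
    exact Algebra.commute_algebraMap_left c (Wp K)
  exact (eval₂_mul_C' _ _ hc).trans (congrArg (normalForm K F * ·) (aeval_C (Wq K) c))

theorem normalForm_surjective : Function.Surjective (normalForm K) := by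
  suffices hmul : ∀ w F, ∃ G, normalForm K G = normalForm K F * w by
    intro w
    simpa [normalForm] using hmul w 1
  intro w
  have hw : w ∈ Algebra.adjoin K {Wp K, Wq K} := adjoin_Wp_Wq K ▸ Algebra.mem_top
  induction hw using Algebra.adjoin_induction with
  | mem w hw =>
    intro F
    rcases hw with rfl | rfl
    · exact ⟨F * X, normalForm_mul_X K F⟩
    · refine ⟨(X : K[X]) • F - F.derivative, ?_⟩
      rw [map_sub, normalForm_X_smul, Wq_mul_normalForm, add_sub_cancel_right]
  | algebraMap c => exact fun F ↦ ⟨F * C (C c), normalForm_mul_C_C K F c⟩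
  | add v w _ _ hv hw =>
    intro F
    obtain ⟨G, hG⟩ := hv F
    obtain ⟨H, hH⟩ := hw F
    exact ⟨G + H, by rw [map_add, hG, hH, mul_add]⟩
  | mul v w _ _ hv hw =>
    intro F
    obtain ⟨G, hG⟩ := hv F
    obtain ⟨H, hH⟩ := hw G
    exact ⟨H, by rw [hH, hG, mul_assoc]⟩

variable {K} {A : Type*} [Ring A]

theorem ringHom_injective [CharZero K] [Nontrivial A] (η : Weyl K →+* A) :
    Function.Injective η := by
  let φ : K[X] →+* A := η.comp (aeval (R := K) (Wq K) : K[X] →+* Weyl K)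
  have hrel : η (Wq K) * η (Wp K) = η (Wp K) * η (Wq K) + 1 := by
    simpa only [map_mul, map_add, map_one] using congrArg η (Wq_mul_Wp K)
  have hφ : Function.Injective φ := by
    have hφ_eq : ⇑φ = eval₂ (η.comp (algebraMap K (Weyl K))) (η (Wq K)) :=
      funext fun f ↦ hom_eval₂ f (algebraMap K (Weyl K)) η (Wq K)
    rw [hφ_eq]
    refine eval₂_injective_of_mul_eq_mul_add_one (z := -η (Wp K)) (RingHom.injective _)
      (fun c ↦ ?_) ?_
    · exact ((Algebra.commute_algebraMap_right c (Wp K)).map η).neg_left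
    · rw [neg_mul, mul_neg, hrel]
      abel
  have hnormal : Function.Injective (eval₂ φ (η (Wp K))) :=
    eval₂_injective_of_mul_eq_mul_add_one hφ (fun f ↦ (commute_Wq_aeval K f).map η) hrel
  have hcomp : η ∘ normalForm K = eval₂ φ (η (Wp K)) :=
    funext fun F ↦ hom_eval₂ F (aeval (R := K) (Wq K) : K[X] →+* Weyl K) η (Wp K)
  exact Function.Injective.of_comp_right (hcomp ▸ hnormal) (normalForm_surjective K)

theorem exists_algHom [Algebra K A] {P Q : A} (h : Q * P = P * Q + 1) :
    ∃ η : Weyl K →ₐ[K] A, η (Wp K) = P ∧ η (Wq K) = Q := by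
  let f : FreeAlgebra K Bool →ₐ[K] A := FreeAlgebra.lift K fun b ↦ if b then Q else P
  have hf : ∀ ⦃x y⦄, WeylRel K x y → f x = f y := by
    rintro _ _ ⟨⟩
    simp [f, h]
  exact ⟨RingQuot.liftAlgHom K ⟨f, hf⟩,
    (RingQuot.liftAlgHom_mkAlgHom_apply K f hf _).trans (by simp [f]),
    (RingQuot.liftAlgHom_mkAlgHom_apply K f hf _).trans (by simp [f])⟩

theorem exists_ringHom (φ : K →+* A) {P Q : A} (hP : ∀ c, Commute (φ c) P)
    (hQ : ∀ c, Commute (φ c) Q) (h : Q * P = P * Q + 1) :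
    ∃ η : Weyl K →+* A,
      η (Wp K) = P ∧ η (Wq K) = Q ∧ ∀ c, η (algebraMap K (Weyl K) c) = φ c := by
  -- `φ` makes the centralizer of its range, though in general not `A` itself, into a `K`-algebra.
  let S : Subring A := Subring.centralizer (Set.range φ)
  have mem_S {x : A} (hx : ∀ c, Commute (φ c) x) : x ∈ S :=
    Subring.mem_centralizer_iff.mpr (Set.forall_mem_range.mpr hx)
  let _ : Algebra K S :=
    (φ.codRestrict S fun c ↦ mem_S fun b ↦ (Commute.all b c).map φ).toAlgebra'
      fun c x ↦ Subtype.ext (Subring.mem_centralizer_iff.mp x.2 _ ⟨c, rfl⟩)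
  obtain ⟨η, hp, hq⟩ := exists_algHom (K := K) (P := (⟨P, mem_S hP⟩ : S)) (Q := ⟨Q, mem_S hQ⟩)
    (Subtype.ext h)
  exact ⟨S.subtype.comp η, congrArg Subtype.val hp, congrArg Subtype.val hq,
    fun c ↦ congrArg Subtype.val (η.commutes c)⟩

end Weyl

theorem InvLaurent.T_ne_zero {L : Type*} [Field L] (n : ℤ) : T L n ≠ 0 := fun h ↦ by
  simpa [T, single] using congrArg (coeff · n) h

namespace DeformedProduct

variable {L : Type*} [Field L]

/-- The ring `(L((T⁻¹)), ·)` attached to a deformed product `μ`: a type synonym of `InvLaurent L`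
that carries the multiplication of `μ`. -/
def SeriesRing (_μ : DeformedProduct L) : Type _ := InvLaurent L

variable (μ : DeformedProduct L)

instance : AddCommGroup μ.SeriesRing := inferInstanceAs (AddCommGroup (InvLaurent L))

/-- The identity map from inverse Laurent series to the ring they form under `μ`. -/
def of : InvLaurent L ≃+ μ.SeriesRing := AddEquiv.refl _

instance : NonUnitalRing μ.SeriesRing where
  mul := μ.mul
  mul_assoc := μ.mul_assoc
  left_distrib := μ.left_distrib
  right_distrib := μ.right_distrib
  zero_mul f := left_eq_add.mp <|
    (congrArg (μ.mul · f) (add_zero 0).symm).trans (μ.right_distrib 0 0 f)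
  mul_zero f := left_eq_add.mp <|
    (congrArg (μ.mul f) (add_zero 0).symm).trans (μ.left_distrib f 0 0)

instance : NoZeroDivisors μ.SeriesRing where
  eq_zero_or_eq_zero_of_mul_eq_zero {f g} hfg := by
    have hdeg : deg (μ.of.symm f) + deg (μ.of.symm g) = ⊥ :=
      (μ.deg_mul _ _).symm.trans ((deg_eq_bot_iff _).mpr hfg)
    simpa only [WithBot.add_eq_bot, deg_eq_bot_iff, AddEquiv.map_eq_zero_iff] using hdeg

theorem of_T_mul_of_T (i j : ℤ) : μ.of (T L i) * μ.of (T L j) = μ.of (T L (i + j)) :=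
  μ.T_mul_T i j

instance : Ring μ.SeriesRing where
  one := μ.of (T L 0)
  one_mul f := (μ.lsmul_eq 1 f).trans (InvLaurent.ext fun i ↦ one_mul (coeff f i))
  mul_one f := by
    change f * μ.of (T L 0) = f
    have hT : μ.of (T L 0) ≠ 0 := (AddEquiv.map_ne_zero_iff μ.of).mpr (T_ne_zero 0)
    refine mul_right_cancel₀ hT ?_
    rw [_root_.mul_assoc, of_T_mul_of_T, add_zero]

theorem of_T_zero : μ.of (T L 0) = 1 := rfl

instance : Nontrivial μ.SeriesRing :=
  ⟨1, 0, (AddEquiv.map_ne_zero_iff μ.of).mpr (T_ne_zero 0)⟩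

theorem of_single_zero_mul (a b : L) (n : ℤ) :
    μ.of (single 0 a) * μ.of (single n b) = μ.of (single n (a * b)) :=
  (μ.lsmul_eq a _).trans (InvLaurent.ext fun _ ↦ mul_ite_zero ..)

/-- The inclusion of the coefficient field as the series `a T^0`. -/
def const : L →+* μ.SeriesRing where
  toFun a := μ.of (single 0 a)
  map_one' := rfl
  map_mul' a b := (μ.of_single_zero_mul a b 0).symm
  map_zero' := InvLaurent.ext fun _ ↦ ite_self 0
  map_add' a b := InvLaurent.ext fun i ↦ by
    change (single 0 (a + b)).coeff i = (single 0 a).coeff i + (single 0 b).coeff i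
    by_cases hi : i = 0 <;> simp [single, hi]

theorem of_single (n : ℤ) (a : L) : μ.of (single n a) = μ.const a * μ.of (T L n) :=
  ((μ.of_single_zero_mul a 1 n).trans (by rw [mul_one])).symm

/-- The series `T` as a unit, with inverse `T⁻¹`. -/
def unitT : μ.SeriesRingˣ where
  val := μ.of (T L 1)
  inv := μ.of (T L (-1))
  val_inv := μ.of_T_mul_of_T 1 (-1)
  inv_val := μ.of_T_mul_of_T (-1) 1

theorem val_unitT_zpow (n : ℤ) : ((μ.unitT ^ n : μ.SeriesRingˣ) : μ.SeriesRing) = μ.of (T L n) := by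
  induction n using Int.induction_on with
  | zero => rfl
  | succ n ih => rw [zpow_add_one, Units.val_mul, ih]; exact μ.of_T_mul_of_T _ _
  | pred n ih => rw [zpow_sub_one, Units.val_mul, ih]; exact μ.of_T_mul_of_T _ _

variable {μ}

theorem commute_of_T {f : μ.SeriesRing} (hf : Commute (μ.of (T L 1)) f) (n : ℤ) :
    Commute (μ.of (T L n)) f :=
  μ.val_unitT_zpow n ▸ Commute.units_zpow_left (u := μ.unitT) hf n

theorem of_T_mul_const_sub {a b : L} {ν : ℤ}
    (ha : μ.of (T L 1) * μ.const a = μ.const a * μ.of (T L 1) + μ.of (single (1 - ν) b))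
    (hb : Commute (μ.of (T L 1)) (μ.const b)) (n : ℤ) :
    μ.of (T L n) * μ.const a - μ.const a * μ.of (T L n) = μ.of (single (n - ν) (n * b)) := by
  have hconj : SemiconjBy (μ.unitT : μ.SeriesRing) (μ.const a)
      (μ.const a + μ.of (single (-ν) b)) := by
    change μ.of (T L 1) * _ = _ * μ.of (T L 1)
    rw [ha, add_mul, of_single, of_single, _root_.mul_assoc, of_T_mul_of_T, neg_add_eq_sub]
  have hcomm : Commute (μ.unitT : μ.SeriesRing) (μ.of (single (-ν) b)) := by
    rw [of_single]
    exact hb.mul_right (commute_of_T rfl (-ν)).symm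
  have hn := (semiconjBy_units_zpow_add_zsmul hconj hcomm n).eq
  rw [val_unitT_zpow] at hn
  rw [hn, add_mul, add_sub_cancel_left, of_single, of_single, zsmul_eq_mul, map_mul, map_intCast]
  simp only [_root_.mul_assoc, of_T_mul_of_T, neg_add_eq_sub]

end DeformedProduct

section DeltaFamily

variable {K : Type*} [Field K] {r s : ℤ}

theorem deltaFamily_of_apply_apply_eq_zero {d : RatFunc K → RatFunc K} (h0 : d 0 = 0)
    (hν : 0 < r + s) {a : RatFunc K} (ha : d (d a) = 0) (i : ℤ) :
    deltaFamily K d r s i a = if i = 1 - (r + s) then d a / s else 0 := by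
  have hiter (j : ℕ) : d^[j + 2] a = 0 := by
    rw [Function.iterate_add_apply]
    change d^[j] (d (d a)) = 0
    rw [ha, Function.iterate_fixed h0]
  unfold deltaFamily
  by_cases hdvd : r + s ∣ 1 - i
  · obtain ⟨k, hk⟩ := hdvd
    have hi : i = 1 - (r + s) ↔ k = 1 := by
      rw [← mul_right_inj' hν.ne' (c := 1), ← hk]
      omega
    rw [hk, Int.mul_ediv_cancel_left _ hν.ne']
    rcases lt_trichotomy k 1 with hk1 | rfl | hk1
    · rw [if_neg (by omega), if_neg (by omega)]
    · rw [if_pos (by simp), if_pos (hi.mpr rfl)]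
      simp [dCoeff, div_eq_inv_mul]
    · obtain ⟨j, hj⟩ : ∃ j, k.toNat = j + 2 := ⟨k.toNat - 2, by omega⟩
      rw [if_pos ⟨dvd_mul_right _ _, hk1.le⟩, if_neg (by omega), hj, hiter, mul_zero]
  · have hi : i ≠ 1 - (r + s) := by
      rintro rfl
      exact hdvd (by rw [sub_sub_cancel])
    rw [if_neg (fun h ↦ hdvd h.1), if_neg hi]

variable {d : Derivation K (RatFunc K) (RatFunc K)} {μ : DeformedProduct (RatFunc K)}

theorem of_T_mul_const_of_hasDelta (hν : 0 < r + s) (hμ : HasDelta μ (deltaFamily K d r s))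
    {a : RatFunc K} (ha : d (d a) = 0) :
    μ.of (T _ 1) * μ.const a =
      μ.const a * μ.of (T _ 1) + μ.of (single (1 - (r + s)) (d a / s)) := by
  rw [← μ.of_single]
  refine InvLaurent.ext fun i ↦ (hμ a i).trans ?_
  rw [deltaFamily_of_apply_apply_eq_zero (map_zero d) hν ha]
  change _ = (if i = 1 then a else 0) + if i = 1 - (r + s) then d a / s else 0
  split_ifs <;> first | omega | simp

theorem commute_of_T_const_algebraMap (hν : 0 < r + s) (hμ : HasDelta μ (deltaFamily K d r s))
    (c : K) (n : ℤ) : Commute (μ.of (T _ n)) (μ.const (algebraMap K _ c)) := by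
  refine DeformedProduct.commute_of_T ?_ n
  have hdc : d (algebraMap K _ c) = 0 := d.map_algebraMap c
  have hT := of_T_mul_const_of_hasDelta hν hμ (a := algebraMap K _ c) (by rw [hdc, map_zero])
  rwa [hdc, zero_div, μ.of_single, map_zero, zero_mul, add_zero] at hT

theorem of_T_mul_const_X_sub (hd : d RatFunc.X = 1) (hν : 0 < r + s)
    (hμ : HasDelta μ (deltaFamily K d r s)) (n : ℤ) :
    μ.of (T _ n) * μ.const RatFunc.X - μ.const RatFunc.X * μ.of (T _ n) =
      μ.of (single (n - (r + s)) ((n : RatFunc K) / s)) := by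
  have hX := of_T_mul_const_of_hasDelta hν hμ (a := RatFunc.X) (by simp [hd])
  have hs : d RatFunc.X / s = algebraMap K (RatFunc K) (1 / s) := by simp [hd]
  have hcomm := commute_of_T_const_algebraMap hν hμ (1 / s) 1
  rw [← hs] at hcomm
  rw [DeformedProduct.of_T_mul_const_sub hX hcomm, hd, mul_one_div]

theorem of_T_mul_of_single_X_sub [CharZero K] (hd : d RatFunc.X = 1) (hs : s ≠ 0)
    (hν : 0 < r + s) (hμ : HasDelta μ (deltaFamily K d r s)) :
    μ.of (T _ s) * μ.of (single r RatFunc.X) - μ.of (single r RatFunc.X) * μ.of (T _ s) = 1 := by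
  have : CharZero (RatFunc K) := charZero_of_injective_algebraMap (algebraMap K _).injective
  have hs' : (s : RatFunc K) ≠ 0 := Int.cast_ne_zero.mpr hs
  calc μ.of (T _ s) * μ.of (single r RatFunc.X) - μ.of (single r RatFunc.X) * μ.of (T _ s)
      = (μ.of (T _ s) * μ.const RatFunc.X - μ.const RatFunc.X * μ.of (T _ s)) * μ.of (T _ r) := by
        simp only [μ.of_single, sub_mul, mul_assoc, μ.of_T_mul_of_T, add_comm r s]
    _ = μ.of (T _ (s - (r + s) + r)) := by
        rw [of_T_mul_const_X_sub hd hν hμ, div_self hs', μ.of_single, map_one, one_mul,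
          μ.of_T_mul_of_T]
    _ = 1 := by rw [show s - (r + s) + r = 0 by ring, μ.of_T_zero]

end DeltaFamily

/-- with `K` of characteristic `0`, `L = K(α)`, `d` the `K`-derivation with
`d(α) = 1`, `r, s ∈ ℤ`, `s ≠ 0`, `ν = r + s > 0`, and `·` a deformed Laurent series product
on `L((T⁻¹))` with `T·f = fT + Σ_{k≥1} (d_k/k!) d^k(f) T^{1-kν}`:
(a) `T^n·α − α·T^n = (n/s)·T^{n−ν}` for every `n ∈ ℤ`;
(b) `T^s·(αT^r) − (αT^r)·T^s = 1`;
(c) there is an injective `K`-algebra homomorphism `η : A₁(K) → L((T⁻¹))` with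
    `η(q) = T^s` and `η(p) = αT^r`. -/
theorem embedding_of_weyl (K : Type*) [Field K] [CharZero K]
    (d : Derivation K (RatFunc K) (RatFunc K)) (hd : d RatFunc.X = 1)
    (r s : ℤ) (hs : s ≠ 0) (hν : 0 < r + s)
    (μ : DeformedProduct (RatFunc K)) (hμ : HasDelta μ (deltaFamily K (⇑d) r s)) :
    (∀ n : ℤ,
      μ.mul (T (RatFunc K) n) (single 0 RatFunc.X) -
          μ.mul (single 0 RatFunc.X) (T (RatFunc K) n) =
        single (n - (r + s)) (((n : ℤ) : RatFunc K) / ((s : ℤ) : RatFunc K))) ∧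
    (μ.mul (T (RatFunc K) s) (single r RatFunc.X) -
        μ.mul (single r RatFunc.X) (T (RatFunc K) s) = T (RatFunc K) 0) ∧
    (∃ η : Weyl K → InvLaurent (RatFunc K),
      Function.Injective η ∧
      η (Wq K) = T (RatFunc K) s ∧
      η (Wp K) = single r RatFunc.X ∧
      (∀ z w : Weyl K, η (z + w) = η z + η w) ∧
      (∀ z w : Weyl K, η (z * w) = μ.mul (η z) (η w)) ∧
      (∀ c : K, η (algebraMap K (Weyl K) c) = single 0 (algebraMap K (RatFunc K) c))) := by
  have hb := of_T_mul_of_single_X_sub hd hs hν hμ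
  have hT := commute_of_T_const_algebraMap hν hμ
  refine ⟨fun n ↦ μ.of.injective (of_T_mul_const_X_sub hd hν hμ n), μ.of.injective hb, ?_⟩
  have hP (c : K) : Commute (μ.const (algebraMap K _ c)) (μ.of (single r RatFunc.X)) := by
    rw [μ.of_single]
    exact ((Commute.all _ _).map μ.const).mul_right (hT c r).symm
  obtain ⟨η, hp, hq, hc⟩ := Weyl.exists_ringHom (μ.const.comp (algebraMap K (RatFunc K))) hP
    (fun c ↦ (hT c s).symm) (sub_eq_iff_eq_add'.mp hb)
  exact ⟨fun z ↦ μ.of.symm (η z), μ.of.symm.injective.comp (Weyl.ringHom_injective η), hq, hp,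
    map_add η, map_mul η, hc⟩

end
end
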